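/- Let d ≥ 3, 1 ≤ m ≤ d−2 and λ > 0 with χ(λ) := e^λ (m/(d+1) + (1 − m/(d+1)) q(d+1−m)) < 1. Then limsup_{N→∞} sup_{j∈ℤ, A∈A^j_m} (‖φ_j‖_∞ − 1) ≤ (e^λ − 1)/(1 − χ(λ)). -/

import Mathlib

open MeasureTheory Filter
open scoped ENNReal Classical

namespace DiscCyl

/-- The lattice `ℤ^{d+1}`. -/
abbrev Lat (d : ℕ) := Fin (d + 1) → ℤ

/-- The discrete cylinder `E = (ℤ/Nℤ)^d × ℤ`. -/
abbrev Cyl (d N : ℕ) := (Fin d → ZMod N) × ℤ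

instance (N : ℕ) : MeasurableSpace (ZMod N) := ⊤

instance (N : ℕ) : Countable (ZMod N) := by
  cases N with
  | zero => exact inferInstanceAs (Countable ℤ)
  | succ n => exact inferInstanceAs (Countable (Fin (n + 1)))

/-- The canonical projection `π_E : ℤ^{d+1} → E`. -/
def projE (d N : ℕ) (v : Lat d) : Cyl d N :=
  (fun i => (v i.castSucc : ZMod N), v (Fin.last d))

/-- The `2(d+1)` unit vectors `±e_i` of `ℤ^{d+1}`. -/
def unitVecs (d : ℕ) : Finset (Lat d) :=
  Finset.image (fun p : Fin (d + 1) × Bool => Pi.single p.1 (if p.2 then (1 : ℤ) else -1))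
    Finset.univ

/-- One-step transition probability of simple random walk on the cylinder:
each of the `2(d+1)` unit moves of `ℤ^{d+1}` is taken with probability `1/(2(d+1))`
and projected to `E`. -/
noncomputable def stepProb (d N : ℕ) (x y : Cyl d N) : ℝ≥0∞ :=
  (((unitVecs d).filter fun e => x + projE d N e = y).card : ℝ≥0∞) / (2 * (d + 1))

/-- `Pl` is the family of laws (indexed by the starting point) of simple random walk
on the cylinder `E = (ℤ/Nℤ)^d × ℤ`. -/
def IsCylRW (d N : ℕ) (Pl : Cyl d N → Measure (ℕ → Cyl d N)) : Prop :=
  (∀ x, IsProbabilityMeasure (Pl x)) ∧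
    ∀ (x : Cyl d N) (n : ℕ) (γ : ℕ → Cyl d N),
      Pl x {ω | ∀ i ≤ n, ω i = γ i} =
        (if γ 0 = x then 1 else 0) * ∏ i ∈ Finset.range n, stepProb d N (γ i) (γ (i + 1))

/-- The lattice `ℤ^ν`. -/
abbrev ZLat (ν : ℕ) := Fin ν → ℤ

/-- Unit vectors of `ℤ^ν`. -/
def zUnitVecs (ν : ℕ) : Set (ZLat ν) :=
  {v | ∃ i, v = Pi.single i 1 ∨ v = Pi.single i (-1)}

/-- One-step transition probability of simple random walk on `ℤ^ν`. -/
noncomputable def zStep (ν : ℕ) (x y : ZLat ν) : ℝ≥0∞ :=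
  if y - x ∈ zUnitVecs ν then (2 * ν : ℝ≥0∞)⁻¹ else 0

/-- `Ql` is the family of laws of simple random walk on `ℤ^ν`. -/
def IsLatRW (ν : ℕ) (Ql : ZLat ν → Measure (ℕ → ZLat ν)) : Prop :=
  (∀ x, IsProbabilityMeasure (Ql x)) ∧
    ∀ (x : ZLat ν) (n : ℕ) (γ : ℕ → ZLat ν),
      Ql x {ω | ∀ i ≤ n, ω i = γ i} =
        (if γ 0 = x then 1 else 0) * ∏ i ∈ Finset.range n, zStep ν (γ i) (γ (i + 1))

/-- `q(ν)`: the return probability to the origin of simple random walk on `ℤ^ν`. -/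
noncomputable def retProb (ν : ℕ) (Ql : ZLat ν → Measure (ℕ → ZLat ν)) : ℝ :=
  ((Ql 0) {ω | ∃ n : ℕ, 1 ≤ n ∧ ω n = 0}).toReal

/-- Entrance time `H_U` (with value `⊤` if `U` is never entered). -/
noncomputable def entT {X : Type*} (U : Set X) (ω : ℕ → X) : ℕ∞ :=
  sInf {t : ℕ∞ | ∃ n : ℕ, ω n ∈ U ∧ t = n}

/-- Exit time `T_U`. -/
noncomputable def exitT {X : Type*} (U : Set X) (ω : ℕ → X) : ℕ∞ :=
  entT Uᶜ ω

/-- `after t f ω = t + f (θ_t ω)`, with value `⊤` when `t = ⊤`. -/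
noncomputable def after {X : Type*} (t : ℕ∞) (f : (ℕ → X) → ℕ∞) (ω : ℕ → X) : ℕ∞ :=
  t.recTopCoe ⊤ fun m => (m : ℕ∞) + f fun k => ω (k + m)

/-- The block `C_j = (ℤ/Nℤ)^d × ([(j-3/4)N, (j+3/4)N] ∩ ℤ)`. -/
def Cblk (d N : ℕ) (j : ℤ) : Set (Cyl d N) :=
  {x | ((j : ℝ) - 3 / 4) * N ≤ (x.2 : ℝ) ∧ (x.2 : ℝ) ≤ ((j : ℝ) + 3 / 4) * N}

/-- The block `B_j = (ℤ/Nℤ)^d × [(j-1)N, (j+1)N]`. -/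
def Bblk (d N : ℕ) (j : ℤ) : Set (Cyl d N) :=
  {x | (j - 1) * (N : ℤ) ≤ x.2 ∧ x.2 ≤ (j + 1) * (N : ℤ)}

/-- The block `B̃_j = (ℤ/Nℤ)^d × [(j-2)N+1, (j+2)N-1]`. -/
def Btl (d N : ℕ) (j : ℤ) : Set (Cyl d N) :=
  {x | (j - 2) * (N : ℤ) + 1 ≤ x.2 ∧ x.2 ≤ (j + 2) * (N : ℤ) - 1}

/-- `D^j_1`: time of the first departure from `B̃_j` after the first return to `B_j`. -/
noncomputable def oneExc (d N : ℕ) (j : ℤ) (ω : ℕ → Cyl d N) : ℕ∞ :=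
  after (entT (Bblk d N j) ω) (exitT (Btl d N j)) ω

/-- `D^j_k`: time of the `k`-th departure from `B̃_j` (after successive returns to `B_j`). -/
noncomputable def DD (d N : ℕ) (j : ℤ) : ℕ → (ℕ → Cyl d N) → ℕ∞
  | 0, _ => 0
  | k + 1, ω => after (DD d N j k ω) (oneExc d N j) ω

/-- The law `P` of the walk with initial distribution uniform on `B_0`. -/
noncomputable def lawP (d N : ℕ) (Pl : Cyl d N → Measure (ℕ → Cyl d N)) :
    Measure (ℕ → Cyl d N) :=
  ((N : ℝ≥0∞) ^ d * (2 * N + 1))⁻¹ •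
    Measure.sum fun x : Cyl d N => if x ∈ Bblk d N 0 then Pl x else 0

/-- Nearest-neighbour adjacency on the cylinder. -/
def adj (d N : ℕ) (x y : Cyl d N) : Prop :=
  x ≠ y ∧ ∃ e ∈ unitVecs d, y = x + projE d N e

/-- `x` and `y` are connected by a nearest-neighbour path inside `S`. -/
def connIn (d N : ℕ) (S : Set (Cyl d N)) (x y : Cyl d N) : Prop :=
  Relation.ReflTransGen (fun a b => a ∈ S ∧ b ∈ S ∧ adj d N a b) x y

/-- `S` is a connected set. -/
def IsConnIn (d N : ℕ) (S : Set (Cyl d N)) : Prop :=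
  ∀ x ∈ S, ∀ y ∈ S, connIn d N S x y

/-- The boundary `∂U`. -/
def bdry (d N : ℕ) (U : Set (Cyl d N)) : Set (Cyl d N) :=
  {x | x ∉ U ∧ ∃ y ∈ U, adj d N x y}

/-- `ℓ^∞`-norm on `ℤ^{d+1}`. -/
def linf {d : ℕ} (v : Lat d) : ℕ := Finset.univ.sup fun i => (v i).natAbs

/-- `ℓ^∞`-distance induced on the cylinder. -/
noncomputable def cylDist (d N : ℕ) (x y : Cyl d N) : ℕ :=
  sInf {r : ℕ | ∃ v : Lat d, projE d N v = y - x ∧ linf v = r}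

/-- `S` has `ℓ^∞`-diameter at least `L`. -/
def diamGE (d N : ℕ) (S : Set (Cyl d N)) (L : ℕ) : Prop :=
  ∃ x ∈ S, ∃ y ∈ S, L ≤ cylDist d N x y

/-- `X_{[0,n]}`: the set of points visited up to time `n`. -/
def ran {X : Type*} (ω : ℕ → X) (n : ℕ) : Set X := {y | ∃ i ≤ n, ω i = y}

/-- The set of points visited up to the (possibly infinite) time `t`. -/
def ranE {X : Type*} (ω : ℕ → X) (t : ℕ∞) : Set X :=
  {y | ∃ i : ℕ, (i : ℕ∞) ≤ t ∧ ω i = y}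

/-- `L_m`: projections to `E` of `m`-dimensional affine coordinate lattices of `ℤ^{d+1}`. -/
def Lcoll (d N m : ℕ) : Set (Set (Cyl d N)) :=
  {F | ∃ I : Finset (Fin (d + 1)), I.card = m ∧ ∃ y : Lat d,
      F = (fun v => projE d N (y + v)) '' {v : Lat d | ∀ i ∉ I, v i = 0}}

/-- `A^j_m`: nonempty subsets of `C_j` contained in some `F ∈ L_m`. -/
def Adm (d N : ℕ) (j : ℤ) (m : ℕ) : Set (Finset (Cyl d N)) :=
  {A | A.Nonempty ∧ ↑A ⊆ Cblk d N j ∧ ∃ F ∈ Lcoll d N m, (↑A : Set (Cyl d N)) ⊆ F}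

/-- The segment `{x + k·e : 0 ≤ k ≤ L}` (addition via `π_E`). -/
def segment (d N : ℕ) (x : Cyl d N) (e : Lat d) (L : ℕ) : Set (Cyl d N) :=
  {y | ∃ k : ℕ, k ≤ L ∧ y = x + projE d N ((k : ℤ) • e)}

/-- The event `V_{K,j,t}` (with `k = ⌊t⌋` excursions). -/
def Vev (d N : ℕ) (K : ℝ) (j : ℤ) (k : ℕ) : Set (ℕ → Cyl d N) :=
  {ω | ∀ x ∈ Cblk d N j, ∀ e ∈ unitVecs d, ∃ i : ℕ, (i : ℝ) < Real.sqrt N ∧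
      ∀ l : ℕ, i ≤ l → l ≤ i + ⌊K * Real.log N⌋₊ →
        x + projE d N ((l : ℤ) • e) ∉ ranE ω (DD d N j k ω)}

/-- The event `U_{K,j,t}` (with `k = ⌊t⌋` excursions). -/
def Uev (d N : ℕ) (K : ℝ) (j : ℤ) (k : ℕ) : Set (ℕ → Cyl d N) :=
  {ω | ∀ F ∈ Lcoll d N 2, ∀ n : ℕ, (n : ℕ∞) ≤ DD d N j k ω →
      ∀ O₁ O₂ : Set (Cyl d N),
        O₁ ⊆ (F ∩ Cblk d N j) \ ran ω n → O₂ ⊆ (F ∩ Cblk d N j) \ ran ω n →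
        IsConnIn d N O₁ → IsConnIn d N O₂ →
        diamGE d N O₁ ⌊K * Real.log N⌋₊ → diamGE d N O₂ ⌊K * Real.log N⌋₊ →
        ∀ p ∈ O₁, ∀ q ∈ O₂, connIn d N ((F ∩ Cblk d N j) \ ran ω n) p q}

/-- A (finite) set `S` disconnects the cylinder. -/
def Disconnects (d N : ℕ) (S : Set (Cyl d N)) : Prop :=
  S.Finite ∧ ∃ M₀ : ℕ, ∀ M : ℕ, M₀ ≤ M → ∀ x y : Cyl d N,
    (M : ℤ) ≤ x.2 → y.2 ≤ -(M : ℤ) → ¬ connIn d N Sᶜ x y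

/-- The disconnection time `T_N`. -/
noncomputable def discT (d N : ℕ) (ω : ℕ → Cyl d N) : ℕ∞ :=
  sInf {t : ℕ∞ | ∃ n : ℕ, Disconnects d N (ran ω n) ∧ t = n}

/-- `r ≤ t` for `t : ℕ∞` and a real threshold `r` (trivially true when `t = ⊤`). -/
def geReal (t : ℕ∞) (r : ℝ) : Prop := ∀ n : ℕ, t = (n : ℕ∞) → r ≤ n

/-- `r < t` for `t : ℕ∞` and a real threshold `r` (trivially true when `t = ⊤`). -/
def gtReal (t : ℕ∞) (r : ℝ) : Prop := ∀ n : ℕ, t = (n : ℕ∞) → r < n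

/-- `φ_j(z) = E_z[exp(λ Σ_{x∈A} 1{H_x < T_{B̃_j}})]`. -/
noncomputable def phi (d N : ℕ) (Pl : Cyl d N → Measure (ℕ → Cyl d N)) (j : ℤ) (lam : ℝ)
    (A : Finset (Cyl d N)) (z : Cyl d N) : ℝ :=
  ∫ ω, Real.exp (lam * ∑ x ∈ A, if entT {x} ω < exitT (Btl d N j) ω then (1 : ℝ) else 0)
    ∂(Pl z)

/-- `‖φ_j‖_∞`. -/
noncomputable def phiSup (d N : ℕ) (Pl : Cyl d N → Measure (ℕ → Cyl d N)) (j : ℤ) (lam : ℝ)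
    (A : Finset (Cyl d N)) : ℝ :=
  ⨆ z : Cyl d N, phi d N Pl j lam A z

/-- `q_N = sup {P_z[H_F < T_{B̃_j}] : F ∈ L_m, z ∈ ∂F}`. -/
noncomputable def qNval (d N m : ℕ) (Pl : Cyl d N → Measure (ℕ → Cyl d N)) (j : ℤ) : ℝ :=
  sSup {r : ℝ | ∃ F ∈ Lcoll d N m, ∃ z ∈ bdry d N F,
      r = ((Pl z) {ω | entT F ω < exitT (Btl d N j) ω}).toReal}

/-- The times `τ_k`: `τ_0` is the entrance time of `(ℤ/Nℤ)^d × Nℤ`, and `τ_{k+1}` is the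
first time after `τ_k` at which the vertical component has moved by exactly `N`. -/
noncomputable def tauT (d N : ℕ) : ℕ → (ℕ → Cyl d N) → ℕ∞
  | 0, ω => entT {x : Cyl d N | (N : ℤ) ∣ x.2} ω
  | k + 1, ω =>
      (tauT d N k ω).recTopCoe ⊤ fun m =>
        sInf {t : ℕ∞ | ∃ n : ℕ, m < n ∧ ((ω n).2 - (ω m).2).natAbs = N ∧ t = n}

/-- `*`-adjacency on `ℤ²`. -/
def starAdj (x y : ℤ × ℤ) : Prop :=
  x ≠ y ∧ (x.1 - y.1).natAbs ≤ 1 ∧ (x.2 - y.2).natAbs ≤ 1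


set_option linter.unusedSectionVars false

section Part1

/-- Prepend a point to a path. -/
def scons {X : Type*} (x : X) (ω : ℕ → X) : ℕ → X
  | 0 => x
  | n + 1 => ω n

theorem measurable_scons {X : Type*} [MeasurableSpace X] (x : X) :
    Measurable (scons x : (ℕ → X) → ℕ → X) := by
  rw [measurable_pi_iff]
  intro n
  cases n with
  | zero => exact measurable_const
  | succ n => exact measurable_pi_apply n

section
variable {X : Type*} [Countable X] [MeasurableSpace X] [MeasurableSingletonClass X]

/-- Cylinder sets. -/
def cyls (X : Type*) : Set (Set (ℕ → X)) :=
  {S | ∃ (n : ℕ) (γ : ℕ → X), S = {ω | ∀ i ≤ n, ω i = γ i}}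

theorem measurableSet_cyl (n : ℕ) (γ : ℕ → X) :
    MeasurableSet {ω : ℕ → X | ∀ i ≤ n, ω i = γ i} := by
  have : {ω : ℕ → X | ∀ i ≤ n, ω i = γ i} = ⋂ i, ⋂ (_ : i ≤ n), {ω | ω i = γ i} := by
    ext; simp
  rw [this]
  refine MeasurableSet.iInter fun i => MeasurableSet.iInter fun _ => ?_
  have h : MeasurableSet ((fun ω : ℕ → X => ω i) ⁻¹' {γ i}) :=
    measurable_pi_apply i (measurableSet_singleton (γ i))
  convert h using 1
  ext ω; simp

theorem isPiSystem_cyls : IsPiSystem (cyls X) := by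
  rintro _ ⟨n, γ, rfl⟩ _ ⟨k, δ, rfl⟩ ⟨ω₀, h1, h2⟩
  refine ⟨max n k, ω₀, ?_⟩
  ext ω
  simp only [Set.mem_inter_iff, Set.mem_ofPred_eq] at *
  constructor
  · rintro ⟨a, b⟩ i hi
    rcases le_max_iff.1 hi with h | h
    · rw [a i h, h1 i h]
    · rw [b i h, h2 i h]
  · intro a
    exact ⟨fun i hi => by rw [a i (le_max_of_le_left hi), h1 i hi],
      fun i hi => by rw [a i (le_max_of_le_right hi), h2 i hi]⟩

theorem generateFrom_cyls :
    (MeasurableSpace.pi : MeasurableSpace (ℕ → X)) = MeasurableSpace.generateFrom (cyls X) := by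
  apply le_antisymm
  · refine iSup_le fun n => ?_
    rw [← measurable_iff_comap_le]
    refine @measurable_to_countable' _ _ _ _ (_) _ fun a => ?_
    rcases isEmpty_or_nonempty X with hX | ⟨⟨x0⟩⟩
    · exact hX.elim a
    have : (fun ω : ℕ → X => ω n) ⁻¹' {a} = ⋃ v : {v : Fin (n+1) → X // v (Fin.last n) = a},
        {ω : ℕ → X | ∀ i ≤ n, ω i = (fun i => if h : i < n + 1 then v.1 ⟨i, h⟩ else x0) i} := by
      ext ω
      simp only [Set.mem_preimage, Set.mem_singleton_iff, Set.mem_iUnion, Set.mem_ofPred_eq]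
      constructor
      · intro h
        refine ⟨⟨fun i => ω i, by simpa using h⟩, fun i hi => ?_⟩
        simp [Nat.lt_succ_of_le hi]
      · rintro ⟨v, hv⟩
        rw [hv n le_rfl]
        have h2 := v.2
        simp only [Nat.lt_succ_self, dite_true]
        exact h2
    rw [this]
    refine MeasurableSet.iUnion fun v => MeasurableSpace.measurableSet_generateFrom ⟨n, _, rfl⟩
  · refine MeasurableSpace.generateFrom_le ?_
    rintro _ ⟨n, γ, rfl⟩
    exact measurableSet_cyl n γ

theorem mc_step (p : X → X → ℝ≥0∞) (P : X → Measure (ℕ → X))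
    (h1 : ∀ x, IsProbabilityMeasure (P x))
    (h2 : ∀ (x : X) (n : ℕ) (γ : ℕ → X), P x {ω | ∀ i ≤ n, ω i = γ i} =
        (if γ 0 = x then 1 else 0) * ∏ i ∈ Finset.range n, p (γ i) (γ (i + 1)))
    (x : X) (f : (ℕ → X) → ℝ≥0∞) (hf : Measurable f) :
    ∫⁻ ω, f ω ∂(P x) = ∑' y, p x y * ∫⁻ ω, f (scons x ω) ∂(P y) := by
  have hsum : ∑' y, p x y = 1 := by
    have e0 : P x {ω | ω 0 = x} = 1 := by
      have := h2 x 0 (fun _ => x)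
      simpa using this
    have e1 : {ω : ℕ → X | ω 0 = x} = ⋃ y, {ω | ∀ i ≤ 1, ω i = scons x (fun _ => y) i} := by
      ext ω
      simp only [Set.mem_ofPred_eq, Set.mem_iUnion]
      constructor
      · intro h
        refine ⟨ω 1, fun i hi => ?_⟩
        interval_cases i
        · simpa [scons] using h
        · simp [scons]
      · rintro ⟨y, hy⟩
        simpa [scons] using hy 0 (by norm_num)
    rw [← e0, e1, measure_iUnion]
    · congr 1; ext y; rw [h2]; simp [scons]
    · intro y z hyz
      rw [Function.onFun, Set.disjoint_left]
      intro ω hω hω'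
      have a := hω 1 le_rfl
      have b := hω' 1 le_rfl
      simp only [scons] at a b
      exact hyz (a.symm.trans b)
    · intro y; exact measurableSet_cyl _ _
  have key : P x = Measure.sum (fun y => p x y • (P y).map (scons x)) := by
    refine ext_of_generate_finite (cyls X) generateFrom_cyls isPiSystem_cyls ?_ ?_
    · rintro _ ⟨n, γ, rfl⟩
      rw [h2, Measure.sum_apply _ (measurableSet_cyl n γ)]
      simp only [Measure.smul_apply, smul_eq_mul]
      simp only [Measure.map_apply (measurable_scons x) (measurableSet_cyl n γ)]
      by_cases hx : γ 0 = x
      · cases n with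
        | zero =>
          have : ∀ y, P y (scons x ⁻¹' {ω | ∀ i ≤ 0, ω i = γ i}) = 1 := by
            intro y
            have : scons x ⁻¹' {ω | ∀ i ≤ 0, ω i = γ i} = Set.univ := by
              ext ω; simp [scons, hx]
            rw [this]; simp
          simp only [this]
          simp [hx, hsum]
        | succ n =>
          have : ∀ y, P y (scons x ⁻¹' {ω | ∀ i ≤ n + 1, ω i = γ i}) =
              P y {ω | ∀ i ≤ n, ω i = (fun i => γ (i+1)) i} := by
            intro y
            congr 1
            ext ω
            simp only [Set.mem_preimage, Set.mem_ofPred_eq]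
            constructor
            · intro h i hi
              exact h (i+1) (by omega)
            · intro h i hi
              cases i with
              | zero => simp [scons, hx]
              | succ i => exact h i (by omega)
          simp only [this, h2]
          rw [tsum_eq_single (γ 1)]
          · rw [Finset.prod_range_succ']
            simp [hx, mul_comm]
          · intro y hy
            simp [Ne.symm hy]
      · have : ∀ y, P y (scons x ⁻¹' {ω | ∀ i ≤ n, ω i = γ i}) = 0 := by
          intro y
          have : scons x ⁻¹' {ω | ∀ i ≤ n, ω i = γ i} = ∅ := by
            ext ω
            simp only [Set.mem_preimage, Set.mem_ofPred_eq, Set.mem_empty_iff_false, iff_false]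
            intro h
            exact hx (h 0 (Nat.zero_le _)).symm
          rw [this]; simp
        simp only [this]
        simp [hx]
    · rw [Measure.sum_apply _ MeasurableSet.univ]
      have : ∀ y, (P y).map (scons x) Set.univ = 1 := by
        intro y
        rw [Measure.map_apply (measurable_scons x) MeasurableSet.univ]
        simp
      simp [this, hsum]
  rw [key, lintegral_sum_measure]
  congr 1; ext y
  rw [lintegral_smul_measure, lintegral_map hf (measurable_scons x), smul_eq_mul]

end

end Part1

section Part2

section
variable {X : Type*} [Countable X] [MeasurableSpace X] [MeasurableSingletonClass X]

/-- Number of visits to `F` before leaving `B` and before time `n`. -/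
noncomputable def vis {X : Type*} (B F : Set X) (n : ℕ) (ω : ℕ → X) : ℕ :=
  ∑ k ∈ Finset.range n, if (∀ i ≤ k, ω i ∈ B) ∧ ω k ∈ F then 1 else 0

theorem vis_scons (B F : Set X) (n : ℕ) (x : X) (ω : ℕ → X) :
    vis B F (n + 1) (scons x ω) =
      if x ∈ B then (if x ∈ F then 1 else 0) + vis B F n ω else 0 := by
  unfold vis
  rw [Finset.sum_range_succ']
  have h0 : ∀ k, (∀ i ≤ k + 1, scons x ω i ∈ B) ↔ x ∈ B ∧ ∀ i ≤ k, ω i ∈ B := by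
    intro k
    constructor
    · intro h
      exact ⟨h 0 (by omega), fun i hi => h (i+1) (by omega)⟩
    · rintro ⟨h, h'⟩ i hi
      cases i with
      | zero => exact h
      | succ i => exact h' i (by omega)
  simp only [h0]
  by_cases hx : x ∈ B
  · simp [hx, scons, add_comm]
  · simp [hx, scons]

theorem vis_mono (B F : Set X) (ω : ℕ → X) : Monotone fun n => vis B F n ω := by
  intro a b hab
  exact Finset.sum_le_sum_of_subset (Finset.range_mono hab)

theorem measurable_vis (B F : Set X) (n : ℕ) : Measurable (vis B F n) := by
  unfold vis
  refine Finset.measurable_sum _ fun k _ => ?_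
  refine Measurable.ite ?_ measurable_const measurable_const
  have : {ω : ℕ → X | (∀ i ≤ k, ω i ∈ B) ∧ ω k ∈ F} =
      (⋂ i, ⋂ (_ : i ≤ k), (fun ω : ℕ → X => ω i) ⁻¹' B) ∩ (fun ω : ℕ → X => ω k) ⁻¹' F := by
    ext; simp
  rw [this]
  refine MeasurableSet.inter ?_ (measurable_pi_apply k (MeasurableSet.of_discrete))
  exact MeasurableSet.iInter fun i => MeasurableSet.iInter fun _ =>
    measurable_pi_apply i (MeasurableSet.of_discrete)

theorem measurable_expvis (B F : Set X) (lam : ℝ) (n : ℕ) :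
    Measurable fun ω : ℕ → X => ENNReal.ofReal (Real.exp (lam * (vis B F n ω : ℝ))) := by
  have := (measurable_from_top (f := fun k : ℕ =>
    ENNReal.ofReal (Real.exp (lam * (k : ℝ))))).comp (measurable_vis B F n)
  exact this

theorem fk_bound (p : X → X → ℝ≥0∞) (P : X → Measure (ℕ → X))
    (h1 : ∀ x, IsProbabilityMeasure (P x))
    (h2 : ∀ (x : X) (n : ℕ) (γ : ℕ → X), P x {ω | ∀ i ≤ n, ω i = γ i} =
        (if γ 0 = x then 1 else 0) * ∏ i ∈ Finset.range n, p (γ i) (γ (i + 1)))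
    (B F : Set X) (lam : ℝ) (h : X → ℝ≥0∞) (hh1 : ∀ x, 1 ≤ h x)
    (hh : ∀ x ∈ B, ENNReal.ofReal (Real.exp (if x ∈ F then lam else 0)) *
      ∑' y, p x y * h y ≤ h x) (n : ℕ) :
    ∀ x, ∫⁻ ω, ENNReal.ofReal (Real.exp (lam * (vis B F n ω : ℝ))) ∂(P x) ≤ h x := by
  induction n with
  | zero =>
    intro x
    have := h1 x
    simpa [vis] using hh1 x
  | succ n ih =>
    intro x
    rw [mc_step p P h1 h2 x _ (measurable_expvis B F lam (n+1))]
    simp only [vis_scons]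
    by_cases hx : x ∈ B
    · refine le_trans ?_ (hh x hx)
      rw [← ENNReal.tsum_mul_left]
      refine ENNReal.tsum_le_tsum fun y => ?_
      have e : ∀ ω : ℕ → X, ENNReal.ofReal (Real.exp (lam *
          ((if x ∈ B then (if x ∈ F then 1 else 0) + vis B F n ω else 0 : ℕ) : ℝ))) =
          ENNReal.ofReal (Real.exp (if x ∈ F then lam else 0)) *
            ENNReal.ofReal (Real.exp (lam * (vis B F n ω : ℝ))) := by
        intro ω
        rw [← ENNReal.ofReal_mul (Real.exp_nonneg _), ← Real.exp_add]
        congr 2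
        by_cases hF : x ∈ F
        · simp [hx, hF]; ring
        · simp [hx, hF]
      simp only [e]
      rw [lintegral_const_mul _ (measurable_expvis B F lam n)]
      rw [mul_left_comm]
      gcongr
      exact ih y
    · refine le_trans ?_ (hh1 x)
      have t := mc_step p P h1 h2 x (fun _ => 1) measurable_const
      simp only [lintegral_const, measure_univ, one_mul] at t
      simp only [hx, if_false]
      simp
      simpa using t.symm.le

theorem hit_lt {X : Type*} (B : Set X) (x : X) (ω : ℕ → X) (h : entT {x} ω < exitT B ω) :
    ∃ k, ω k = x ∧ ∀ i ≤ k, ω i ∈ B := by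
  unfold exitT at h
  rw [entT, sInf_lt_iff] at h
  obtain ⟨t, ⟨k, hk, rfl⟩, hlt⟩ := h
  refine ⟨k, by simpa using hk, fun i hi => ?_⟩
  by_contra hB
  have : entT Bᶜ ω ≤ (i : ℕ∞) := sInf_le ⟨i, hB, rfl⟩
  have h3 : (k : ℕ∞) < (i : ℕ∞) := lt_of_lt_of_le hlt this
  have h4 : k < i := by exact_mod_cast h3
  omega

theorem exp_count_le (B F : Set X) (lam : ℝ) (hlam : 0 ≤ lam) (A : Finset X)
    (hA : ∀ x ∈ A, x ∈ F) (ω : ℕ → X) :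
    ∃ n, Real.exp (lam * ∑ x ∈ A, if entT {x} ω < exitT B ω then (1 : ℝ) else 0) ≤
      Real.exp (lam * (vis B F n ω : ℝ)) := by
  have hex : ∀ x, ∃ k, entT {x} ω < exitT B ω → ω k = x ∧ ∀ i ≤ k, ω i ∈ B := by
    intro x
    by_cases h : entT {x} ω < exitT B ω
    · obtain ⟨k, hk⟩ := hit_lt B x ω h
      exact ⟨k, fun _ => hk⟩
    · exact ⟨0, fun h' => absurd h' h⟩
  choose κ hκ using hex
  refine ⟨A.sup κ + 1, ?_⟩
  apply Real.exp_le_exp.2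
  apply mul_le_mul_of_nonneg_left _ hlam
  rw [← Finset.sum_filter, vis, ← Finset.sum_filter]
  simp only [Finset.sum_const, nsmul_eq_mul, mul_one, smul_eq_mul]
  norm_cast
  refine Finset.card_le_card_of_injOn κ ?_ ?_
  · intro x hx
    simp only [Finset.coe_filter, Set.mem_ofPred_eq] at hx
    obtain ⟨a, b⟩ := hκ x hx.2
    simp only [Finset.coe_filter, Set.mem_ofPred_eq, Finset.mem_range]
    refine ⟨Nat.lt_succ_of_le (Finset.le_sup hx.1), b, ?_⟩
    rw [a]; exact hA x hx.1
  · intro x hx y hy hxy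
    simp only [Finset.coe_filter, Set.mem_ofPred_eq] at hx hy
    rw [← (hκ x hx.2).1, hxy, (hκ y hy.2).1]

theorem phi_bound (p : X → X → ℝ≥0∞) (P : X → Measure (ℕ → X))
    (h1 : ∀ x, IsProbabilityMeasure (P x))
    (h2 : ∀ (x : X) (n : ℕ) (γ : ℕ → X), P x {ω | ∀ i ≤ n, ω i = γ i} =
        (if γ 0 = x then 1 else 0) * ∏ i ∈ Finset.range n, p (γ i) (γ (i + 1)))
    (B F : Set X) (lam : ℝ) (hlam : 0 ≤ lam) (h : X → ℝ≥0∞) (hh1 : ∀ x, 1 ≤ h x)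
    (hh : ∀ x ∈ B, ENNReal.ofReal (Real.exp (if x ∈ F then lam else 0)) *
      ∑' y, p x y * h y ≤ h x) (A : Finset X)
    (hA : ∀ x ∈ A, x ∈ F) (S : ℝ) (hS0 : 0 ≤ S) (hS : ∀ x, h x ≤ ENNReal.ofReal S) (z : X) :
    ∫ ω, Real.exp (lam * ∑ x ∈ A, if entT {x} ω < exitT B ω then (1 : ℝ) else 0) ∂(P z) ≤ S := by
  by_cases hm : AEStronglyMeasurable (fun ω => Real.exp (lam * ∑ x ∈ A,
      if entT {x} ω < exitT B ω then (1 : ℝ) else 0)) (P z)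
  · rw [integral_eq_lintegral_of_nonneg_ae (Eventually.of_forall fun _ => Real.exp_nonneg _) hm]
    refine ENNReal.toReal_le_of_le_ofReal hS0 ?_
    refine le_trans (lintegral_mono (g := fun ω => ⨆ n, ENNReal.ofReal
      (Real.exp (lam * (vis B F n ω : ℝ)))) fun ω => ?_) ?_
    · obtain ⟨n, hn⟩ := exp_count_le B F lam hlam A hA ω
      exact le_trans (ENNReal.ofReal_le_ofReal hn)
        (le_iSup (fun n => ENNReal.ofReal (Real.exp (lam * (vis B F n ω : ℝ)))) n)
    · rw [lintegral_iSup (measurable_expvis B F lam)]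
      · exact iSup_le fun n => (fk_bound p P h1 h2 B F lam h hh1 hh n z).trans (hS z)
      · intro a b hab ω
        refine ENNReal.ofReal_le_ofReal (Real.exp_le_exp.2 ?_)
        exact mul_le_mul_of_nonneg_left (by exact_mod_cast vis_mono B F ω hab) hlam
  · rw [integral_non_aestronglyMeasurable hm]
    exact hS0
end

end Part2

section Part3

/-- The averaging operator over `± e i`. -/
noncomputable def av {G : Type*} [AddCommGroup G] {n : ℕ} (e : Fin n → G) (f : G → ℝ) (x : G) : ℝ :=
  (∑ i, (f (x + e i) + f (x - e i))) / (2 * n)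

theorem av_mono {G : Type*} [AddCommGroup G] {n : ℕ} (e : Fin n → G) (f g : G → ℝ) (x : G)
    (h : ∀ i, f (x + e i) ≤ g (x + e i) ∧ f (x - e i) ≤ g (x - e i)) : av e f x ≤ av e g x := by
  unfold av
  gcongr with i
  · exact (h i).1
  · exact (h i).2

theorem av_const {G : Type*} [AddCommGroup G] {n : ℕ} (hn : 0 < n) (e : Fin n → G) (c : ℝ) (x : G) :
    av e (fun _ => c) x = c := by
  unfold av
  have : (n : ℝ) ≠ 0 := by positivity
  simp
  field_simp
  ring

theorem av_add {G : Type*} [AddCommGroup G] {n : ℕ} (e : Fin n → G) (f g : G → ℝ) (x : G) :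
    av e (fun y => f y + g y) x = av e f x + av e g x := by
  unfold av
  rw [← add_div, ← Finset.sum_add_distrib]
  congr 1
  exact Finset.sum_congr rfl fun i _ => by ring

theorem av_smul {G : Type*} [AddCommGroup G] {n : ℕ} (e : Fin n → G) (c : ℝ) (f : G → ℝ) (x : G) :
    av e (fun y => c * f y) x = c * av e f x := by
  unfold av
  rw [← mul_div_assoc, Finset.mul_sum]
  congr 1
  exact Finset.sum_congr rfl fun i _ => by ring

theorem av_sum {G : Type*} [AddCommGroup G] {n : ℕ} (e : Fin n → G) {ι : Type*} (s : Finset ι)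
    (f : ι → G → ℝ) (x : G) :
    av e (fun y => ∑ k ∈ s, f k y) x = ∑ k ∈ s, av e (f k) x := by
  unfold av
  rw [← Finset.sum_div, Finset.sum_comm]
  simp only [Finset.sum_add_distrib]

theorem av_nonneg {G : Type*} [AddCommGroup G] {n : ℕ} (e : Fin n → G) (f : G → ℝ) (x : G)
    (h : ∀ y, 0 ≤ f y) : 0 ≤ av e f x := by
  unfold av
  have := fun i => add_nonneg (h (x + e i)) (h (x - e i))
  exact div_nonneg (Finset.sum_nonneg fun i _ => this i) (by positivity)

/-- Unit vectors in the cylinder. -/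
def eC (d N : ℕ) (i : Fin (d + 1)) : Cyl d N := projE d N (Pi.single i 1)

theorem projE_add (d N : ℕ) (v w : Lat d) : projE d N (v + w) = projE d N v + projE d N w := by
  unfold projE
  ext i <;> simp

theorem projE_neg (d N : ℕ) (v : Lat d) : projE d N (-v) = - projE d N v := by
  unfold projE
  ext i <;> simp

theorem single_inj (d : ℕ) : Function.Injective (fun p : Fin (d + 1) × Bool =>
    (Pi.single p.1 (if p.2 then (1 : ℤ) else -1) : Lat d)) := by
  rintro ⟨i, a⟩ ⟨j, b⟩ h
  simp only at h
  have hij : i = j := by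
    by_contra hij
    have := congrFun h i
    rw [Pi.single_eq_same, Pi.single_eq_of_ne hij] at this
    split_ifs at this <;> omega
  subst hij
  have := congrFun h i
  simp only [Pi.single_eq_same] at this
  cases a <;> cases b <;> simp_all

theorem tsum_stepProb (d N : ℕ) (x : Cyl d N) (h : Cyl d N → ℝ) (hh : ∀ y, 0 ≤ h y) :
    ∑' y, stepProb d N x y * ENNReal.ofReal (h y) = ENNReal.ofReal (av (eC d N) h x) := by
  have e1 : ∀ y, stepProb d N x y * ENNReal.ofReal (h y) =
      ∑ e ∈ unitVecs d, (if y = x + projE d N e then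
        ENNReal.ofReal (h (x + projE d N e)) / (2 * (d + 1)) else 0) := by
    intro y
    unfold stepProb
    rw [Finset.card_filter, Nat.cast_sum, ENNReal.div_eq_inv_mul, mul_comm, ← mul_assoc,
      Finset.mul_sum]
    refine Finset.sum_congr rfl fun e _ => ?_
    by_cases hy : x + projE d N e = y
    · subst hy
      simp [ENNReal.div_eq_inv_mul, mul_comm]
    · simp [hy, Ne.symm hy]
  simp only [e1]
  rw [Summable.tsum_finsetSum (fun _ _ => ENNReal.summable)]
  simp only [tsum_ite_eq]
  unfold unitVecs
  rw [Finset.sum_image (fun a _ b _ hab => single_inj d hab)]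
  rw [Fintype.sum_prod_type]
  simp only [Fintype.sum_bool, if_true]
  simp only [Bool.false_eq_true, if_false, ENNReal.div_eq_inv_mul, ← mul_add]
  rw [← Finset.mul_sum]
  unfold av eC
  rw [ENNReal.ofReal_div_of_pos (by positivity), ENNReal.div_eq_inv_mul]
  congr 1
  · congr 1
    rw [ENNReal.ofReal_mul (by norm_num), ENNReal.ofReal_natCast]
    push_cast
    simp
  · rw [ENNReal.ofReal_sum_of_nonneg (fun i _ => add_nonneg (hh _) (hh _))]
    refine Finset.sum_congr rfl fun i _ => ?_
    rw [ENNReal.ofReal_add (hh _) (hh _)]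
    rw [show (Pi.single i (-1) : Lat d) = - Pi.single i 1 by rw [← Pi.single_neg], projE_neg,
      sub_eq_add_neg]

theorem phi_le_of_potential (d N : ℕ) (Pl : Cyl d N → Measure (ℕ → Cyl d N))
    (hPl : IsCylRW d N Pl) (j : ℤ) (lam : ℝ) (hlam : 0 < lam) (A : Finset (Cyl d N))
    (F : Set (Cyl d N)) (hA : ∀ x ∈ A, x ∈ F) (p' : ℝ) (hp : Real.exp lam * p' < 1)
    (g : Cyl d N → ℝ) (g0 : ∀ x, 0 ≤ g x) (g1 : ∀ x, g x ≤ 1)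
    (gF : ∀ x ∈ Btl d N j, x ∈ F → g x = 1)
    (gs : ∀ x ∈ Btl d N j, x ∉ F → av (eC d N) g x ≤ g x)
    (gp : ∀ x ∈ Btl d N j, x ∈ F → av (eC d N) g x ≤ p') (z : Cyl d N) :
    phi d N Pl j lam A z ≤ 1 + (Real.exp lam - 1) / (1 - Real.exp lam * p') := by
  set s := (Real.exp lam - 1) / (1 - Real.exp lam * p') with hs
  have hE : 1 < Real.exp lam := Real.one_lt_exp_iff.2 hlam
  have hs0 : 0 ≤ s := div_nonneg (by linarith) (by linarith)
  have hs1 : s * (1 - Real.exp lam * p') = Real.exp lam - 1 :=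
    div_mul_cancel₀ _ (by linarith)
  have hav : ∀ x, av (eC d N) (fun y => 1 + s * g y) x = 1 + s * av (eC d N) g x := by
    intro x
    rw [av_add, av_const (Nat.succ_pos d), av_smul]
  have hpos : ∀ y, 0 ≤ 1 + s * g y := fun y => by have := mul_nonneg hs0 (g0 y); linarith
  obtain ⟨h1, h2⟩ := hPl
  unfold phi
  refine phi_bound (stepProb d N) Pl h1 ?_ (Btl d N j) F lam hlam.le
    (fun x => ENNReal.ofReal (1 + s * g x)) ?_ ?_ A hA (1 + s) (by linarith) ?_ z
  · intro x n γ
    convert h2 x n γ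
  · intro x
    rw [← ENNReal.ofReal_one]
    refine ENNReal.ofReal_le_ofReal ?_
    have := mul_nonneg hs0 (g0 x); linarith
  · intro x hx
    rw [tsum_stepProb d N x _ hpos, hav, ← ENNReal.ofReal_mul (Real.exp_nonneg _)]
    refine ENNReal.ofReal_le_ofReal ?_
    by_cases hF : x ∈ F
    · have := mul_le_mul_of_nonneg_left (gp x hx hF) hs0
      rw [gF x hx hF]
      simp only [hF, if_true]
      nlinarith
    · have := mul_le_mul_of_nonneg_left (gs x hx hF) hs0
      simp only [hF, if_false, Real.exp_zero]
      linarith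
  · intro x
    refine ENNReal.ofReal_le_ofReal ?_
    have := mul_le_mul_of_nonneg_left (g1 x) hs0
    linarith


end Part3

section Part4

/-! ### One-dimensional exponential sums -/

theorem exp_cos_bound (N : ℕ) (hN : 0 < N) (t : ℝ) (ht : 0 < t) (k : ℕ) (hk : 2 * k ≤ N) :
    Real.exp (-(t * (1 - Real.cos (2 * Real.pi * k / N)))) ≤
      2 * Real.exp (-(Real.sqrt (8 * t) / N)) ^ k := by
  have hN' : (0 : ℝ) < N := by exact_mod_cast hN
  have hpi := Real.pi_pos
  have hk' : 2 * (k : ℝ) ≤ N := by exact_mod_cast hk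
  have hk0 : (0 : ℝ) ≤ k := Nat.cast_nonneg k
  have h1 : |2 * Real.pi * k / N| ≤ Real.pi := by
    rw [abs_of_nonneg (by positivity), div_le_iff₀ hN']
    nlinarith
  have h2 := Real.cos_le_one_sub_mul_cos_sq h1
  have h3 : 2 / Real.pi ^ 2 * (2 * Real.pi * k / N) ^ 2 = 8 * (k / N) ^ 2 := by
    field_simp; ring
  rw [h3] at h2
  rw [← Real.exp_nat_mul]
  set b := Real.sqrt (8 * t) / N with hb
  have hb2 : t * (8 * ((k : ℝ) / N) ^ 2) = (k * b) ^ 2 := by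
    rw [hb]
    have : Real.sqrt (8 * t) ^ 2 = 8 * t := Real.sq_sqrt (by positivity)
    rw [mul_pow, div_pow (Real.sqrt (8 * t)), this]
    field_simp
  have h4 : -(t * (1 - Real.cos (2 * Real.pi * k / N))) ≤ 1 / 4 + k * -b := by
    have : t * (8 * ((k : ℝ) / N) ^ 2) ≤ t * (1 - Real.cos (2 * Real.pi * k / N)) :=
      mul_le_mul_of_nonneg_left (by linarith) ht.le
    nlinarith [sq_nonneg (k * b - 1 / 2)]
  have h5 : Real.exp (1 / 4) ≤ 2 := by
    have := Real.exp_bound' (x := 1/4) (by norm_num) (by norm_num) (n := 2) (by norm_num)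
    refine this.trans ?_
    simp [Finset.sum_range_succ]
    norm_num
  calc _ ≤ Real.exp (1 / 4 + k * -b) := Real.exp_le_exp.2 h4
    _ = Real.exp (1 / 4) * Real.exp (k * -b) := Real.exp_add _ _
    _ ≤ _ := mul_le_mul_of_nonneg_right h5 (Real.exp_nonneg _)

theorem geom_le (r : ℝ) (h0 : 0 ≤ r) (h1 : r < 1) (N : ℕ) :
    ∑ k ∈ Finset.range N, r ^ k ≤ 1 / (1 - r) := by
  rw [geom_sum_eq h1.ne, ← neg_div_neg_eq, neg_sub, neg_sub]
  have := pow_nonneg h0 N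
  exact div_le_div_of_nonneg_right (by linarith) (by linarith)

theorem sum_exp_cos (N : ℕ) (hN : 0 < N) (t : ℝ) (ht : 0 < t) :
    ∑ k ∈ Finset.range N, Real.exp (-(t * (1 - Real.cos (2 * Real.pi * k / N)))) ≤
      4 * (1 + N / Real.sqrt (8 * t)) := by
  have hN' : (0 : ℝ) < N := by exact_mod_cast hN
  set b := Real.sqrt (8 * t) / N with hb
  have hb0 : 0 < b := by rw [hb]; positivity
  set r := Real.exp (-b) with hr
  have hr0 : 0 < r := Real.exp_pos _
  have hr1 : r ≤ 1 / (1 + b) := by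
    rw [hr, Real.exp_neg, ← one_div]
    apply one_div_le_one_div_of_le (by linarith)
    linarith [Real.add_one_le_exp b]
  have hr2 : r < 1 := by
    rw [hr]; rw [← Real.exp_zero]; exact Real.exp_lt_exp.2 (by linarith)
  have hr3 : 1 / (1 - r) ≤ 1 + 1 / b := by
    rw [div_le_iff₀ (by linarith)]
    have e : (1 + 1 / b) * (1 - 1 / (1 + b)) = 1 := by field_simp; ring
    calc (1 : ℝ) = (1 + 1 / b) * (1 - 1 / (1 + b)) := e.symm
      _ ≤ (1 + 1 / b) * (1 - r) := mul_le_mul_of_nonneg_left (by linarith) (by positivity)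
  have hterm : ∀ k ∈ Finset.range N, Real.exp (-(t * (1 - Real.cos (2 * Real.pi * k / N)))) ≤
      2 * (r ^ k + r ^ (N - 1 - k)) := by
    intro k hk
    rw [Finset.mem_range] at hk
    by_cases h : 2 * k ≤ N
    · have := exp_cos_bound N hN t ht k h
      have h' := pow_pos hr0 (N - 1 - k)
      linarith
    · have hcos : Real.cos (2 * Real.pi * k / N) = Real.cos (2 * Real.pi * (N - k : ℕ) / N) := by
        rw [Nat.cast_sub hk.le]
        rw [show 2 * Real.pi * ((N : ℝ) - k) / N = 2 * Real.pi - 2 * Real.pi * k / N by field_simp]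
        rw [Real.cos_two_pi_sub]
      have := exp_cos_bound N hN t ht (N - k) (by omega)
      rw [hcos]
      have h' := pow_pos hr0 k
      have h'' : r ^ (N - k) ≤ r ^ (N - 1 - k) :=
        pow_le_pow_of_le_one hr0.le hr2.le (by omega)
      linarith
  refine (Finset.sum_le_sum hterm).trans ?_
  rw [← Finset.mul_sum, Finset.sum_add_distrib, Finset.sum_range_reflect (fun k => r ^ k) N]
  have h1 := geom_le r hr0.le hr2 N
  have h2 : 1 / b = N / Real.sqrt (8 * t) := by rw [hb, one_div_div]
  rw [h2] at hr3
  linarith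

theorem sum_char (N : ℕ) [NeZero N] (t : ℝ) (ht : 0 < t) :
    (∑ k : ZMod N, Real.exp (-(t * (1 - (ZMod.stdAddChar k).re)))) ≤
      4 * (1 + N / Real.sqrt (8 * t)) := by
  have hN : 0 < N := Nat.pos_of_ne_zero (NeZero.ne N)
  have hre : ∀ k : ZMod N, (ZMod.stdAddChar k).re = Real.cos (2 * Real.pi * k.val / N) := by
    intro k
    rw [ZMod.stdAddChar_apply, ZMod.toCircle_apply]
    rw [show (2 * (Real.pi : ℂ) * Complex.I * (k.val : ℂ) / N) =
      ((2 * Real.pi * k.val / N : ℝ) : ℂ) * Complex.I by push_cast; ring]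
    rw [Complex.exp_ofReal_mul_I_re]
  simp only [hre]
  refine le_trans (le_of_eq ?_) (sum_exp_cos N hN t ht)
  obtain ⟨M, rfl⟩ : ∃ M, N = M + 1 := ⟨N - 1, by omega⟩
  exact Fin.sum_univ_eq_sum_range (fun k => Real.exp (-(t * (1 - Real.cos
    (2 * Real.pi * (k : ℝ) / ((M + 1 : ℕ) : ℝ)))))) (M + 1)


end Part4

section Part5

/-- Standard unit vectors. -/
def eT (n : ℕ) (R : Type*) [AddGroupWithOne R] (i : Fin n) : Fin n → R := Pi.single i 1

/-- Indicator of vanishing of the coordinates in `J`. -/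
noncomputable def ind0 {n : ℕ} {R : Type*} [Zero R] (J : Finset (Fin n)) (w : Fin n → R) : ℝ :=
  if ∀ i ∈ J, w i = 0 then 1 else 0

/-- `n`-step probabilities of being in the lattice `{w_J = 0}`. -/
noncomputable def uK {n : ℕ} {R : Type*} [AddCommGroupWithOne R] (J : Finset (Fin n)) :
    ℕ → (Fin n → R) → ℝ
  | 0 => ind0 J
  | k + 1 => av (eT n R) (uK J k)

theorem uK_nonneg {n : ℕ} {R : Type*} [AddCommGroupWithOne R] (J : Finset (Fin n)) (k : ℕ) :
    ∀ w : Fin n → R, 0 ≤ uK J k w := by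
  induction k with
  | zero => intro w; unfold uK ind0; split_ifs <;> norm_num
  | succ k ih => intro w; exact av_nonneg _ _ _ ih

theorem uK_congr {n : ℕ} {R : Type*} [AddCommGroupWithOne R] (J : Finset (Fin n)) (k : ℕ) :
    ∀ w w' : Fin n → R, (∀ i ∈ J, w i = w' i) → uK J k w = uK J k w' := by
  induction k with
  | zero =>
    intro w w' h
    unfold uK ind0
    congr 1
    apply propext
    exact forall₂_congr fun i hi => by rw [h i hi]
  | succ k ih =>
    intro w w' h
    simp only [uK, av]
    congr 1
    refine Finset.sum_congr rfl fun i _ => ?_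
    rw [ih (w + eT n R i) (w' + eT n R i) fun a ha => by simp [h a ha],
      ih (w - eT n R i) (w' - eT n R i) fun a ha => by simp [h a ha]]

section
variable {n N : ℕ} [NeZero N]

/-- Complex characters in the `J` directions. -/
noncomputable def chi (J : Finset (Fin n)) (κ w : Fin n → ZMod N) : ℂ :=
  ∏ i, if i ∈ J then ZMod.stdAddChar (κ i * w i) else 1

/-- Cosine factors. -/
noncomputable def tfac (J : Finset (Fin n)) (κ : Fin n → ZMod N) (i : Fin n) : ℝ :=
  if i ∈ J then (ZMod.stdAddChar (κ i)).re else 1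

theorem chi_add (J : Finset (Fin n)) (κ w v : Fin n → ZMod N) :
    chi J κ (w + v) = chi J κ w * chi J κ v := by
  unfold chi
  rw [← Finset.prod_mul_distrib]
  refine Finset.prod_congr rfl fun i _ => ?_
  split_ifs
  · rw [Pi.add_apply, mul_add, AddChar.map_add_eq_mul]
  · simp

theorem chi_single (J : Finset (Fin n)) (κ : Fin n → ZMod N) (i : Fin n) (c : ZMod N) :
    chi J κ (Pi.single i c) = if i ∈ J then ZMod.stdAddChar (κ i * c) else 1 := by
  unfold chi
  rw [Finset.prod_eq_single i]
  · simp
  · intro b _ hb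
    simp [Pi.single_eq_of_ne hb]
  · simp

theorem chi_norm (J : Finset (Fin n)) (κ w : Fin n → ZMod N) : ‖chi J κ w‖ = 1 := by
  unfold chi
  rw [norm_prod]
  refine Finset.prod_eq_one fun i _ => ?_
  split_ifs
  · exact AddChar.norm_apply _ _
  · simp

theorem av_chi (hn : 0 < n) (J : Finset (Fin n)) (κ w : Fin n → ZMod N) :
    av (eT n (ZMod N)) (fun w => (chi J κ w).re) w =
      ((∑ i, tfac J κ i) / n) * (chi J κ w).re := by
  unfold av
  have : ∀ i, (chi J κ (w + eT n (ZMod N) i)).re + (chi J κ (w - eT n (ZMod N) i)).re =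
      2 * (tfac J κ i * (chi J κ w).re) := by
    intro i
    rw [sub_eq_add_neg, chi_add, chi_add]
    unfold eT
    rw [← Pi.single_neg, chi_single, chi_single]
    unfold tfac
    split_ifs
    · rw [mul_neg, AddChar.map_neg_eq_conj, mul_one]
      simp only [Complex.mul_re, Complex.conj_re, Complex.conj_im]
      ring
    · simp; ring
  simp only [this]
  rw [← Finset.mul_sum, ← Finset.sum_mul]
  have : (n : ℝ) ≠ 0 := by positivity
  field_simp

theorem uK_fourier (hn : 0 < n) (J : Finset (Fin n)) (k : ℕ) : ∀ w : Fin n → ZMod N,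
    uK J k w = ∑ κ : Fin n → ZMod N,
      (1 / (N : ℝ) ^ n * ((∑ i, tfac J κ i) / n) ^ k) * (chi J κ w).re := by
  have hN : (N : ℝ) ≠ 0 := by exact_mod_cast NeZero.ne N
  induction k with
  | zero =>
    intro w
    have h1 : ∑ κ : Fin n → ZMod N, chi J κ w =
        ∏ i : Fin n, ∑ c : ZMod N, (if i ∈ J then ZMod.stdAddChar (c * w i) else 1) := by
      rw [Finset.prod_univ_sum, Fintype.piFinset_univ]
      rfl
    have h2 : ∀ i : Fin n, ∑ c : ZMod N, (if i ∈ J then ZMod.stdAddChar (c * w i) else (1 : ℂ)) =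
        if i ∈ J ∧ w i ≠ 0 then 0 else (N : ℂ) := by
      intro i
      by_cases hi : i ∈ J
      · simp only [hi, if_true, true_and]
        rw [AddChar.sum_mulShift (w i) (ZMod.isPrimitive_stdAddChar N)]
        by_cases hw : w i = 0 <;> simp [hw, ZMod.card]
      · simp [hi, ZMod.card]
    have h3 : (∑ κ : Fin n → ZMod N, chi J κ w) = ((N : ℝ) ^ n * ind0 J w : ℝ) := by
      rw [h1]
      simp only [h2]
      unfold ind0
      by_cases hw : ∀ i ∈ J, w i = 0
      · have : ∀ i, ¬ (i ∈ J ∧ w i ≠ 0) := fun i hi => hi.2 (hw i hi.1)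
        simp only [this, if_false]
        rw [if_pos hw]
        simp
      · rw [if_neg hw]
        push Not at hw
        obtain ⟨i, hi, hwi⟩ := hw
        rw [Finset.prod_eq_zero (Finset.mem_univ i)]
        · simp
        · simp [hi, hwi]
    have h4 := congrArg Complex.re h3
    rw [Complex.re_sum, Complex.ofReal_re] at h4
    simp only [uK, pow_zero, mul_one]
    rw [← Finset.mul_sum, h4]
    field_simp
  | succ k ih =>
    intro w
    have : uK J k = fun w : Fin n → ZMod N => ∑ κ : Fin n → ZMod N,
      (1 / (N : ℝ) ^ n * ((∑ i, tfac J κ i) / n) ^ k) * (chi J κ w).re := funext ih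
    rw [uK, this, av_sum]
    refine Finset.sum_congr rfl fun κ _ => ?_
    rw [av_smul, av_chi hn]
    ring

theorem tfac_le (J : Finset (Fin n)) (κ : Fin n → ZMod N) (i : Fin n) :
    tfac J κ i ≤ 1 ∧ -1 ≤ tfac J κ i := by
  unfold tfac
  split_ifs
  · have h := Complex.abs_re_le_norm (ZMod.stdAddChar (κ i))
    rw [AddChar.norm_apply, abs_le] at h
    exact ⟨h.2, h.1⟩
  · norm_num

theorem phi_abs (J : Finset (Fin n)) (hJ : J.card < n) (κ : Fin n → ZMod N) :
    |(∑ i, tfac J κ i) / n| ≤ ∏ i, Real.exp (-((1 - tfac J κ i) / n ^ 2)) := by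
  have hn : 0 < n := by omega
  have hn' : (1 : ℝ) ≤ n := by exact_mod_cast hn
  obtain ⟨i0, hi0⟩ : ∃ i0, i0 ∉ J := by
    by_contra h
    push Not at h
    have : J = Finset.univ := Finset.eq_univ_iff_forall.2 h
    rw [this] at hJ
    simp at hJ
  rw [← Real.exp_sum, Finset.sum_neg_distrib, ← Finset.sum_div]
  set s := ∑ i, (1 - tfac J κ i) with hs
  have e1 : ∑ i, tfac J κ i = n - s := by
    rw [hs, Finset.sum_sub_distrib]; simp
  have s0 : 0 ≤ s := Finset.sum_nonneg fun i _ => by linarith [(tfac_le J κ i).1]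
  have s1 : s ≤ 2 * (n - 1) := by
    rw [hs, ← Finset.sum_erase_add _ _ (Finset.mem_univ i0)]
    have : tfac J κ i0 = 1 := by simp [tfac, hi0]
    rw [this, sub_self, add_zero]
    calc _ ≤ ∑ i ∈ Finset.univ.erase i0, (2 : ℝ) :=
          Finset.sum_le_sum fun i _ => by linarith [(tfac_le J κ i).2]
      _ = 2 * (n - 1) := by
          rw [Finset.sum_const, Finset.card_erase_of_mem (Finset.mem_univ i0)]
          simp
          rw [Nat.cast_sub hn]; push_cast; ring
  rw [e1]
  have hexp := Real.add_one_le_exp (-(s / n ^ 2))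
  refine le_trans ?_ hexp
  have e2 : s / n ^ 2 ≤ s / n := by
    apply div_le_div_of_nonneg_left s0 (by positivity)
    nlinarith
  have e3 : s / (n : ℝ) ^ 2 ≤ 2 * (n - 1) / n ^ 2 := by gcongr
  have e4 : (n - s) / (n : ℝ) = 1 - s / n := by field_simp
  rw [e4, abs_le]
  constructor
  · have : s / n + s / (n : ℝ) ^ 2 ≤ 2 := by
      have : s / n ≤ 2 * (n - 1) / n := by gcongr
      have e : 2 * ((n : ℝ) - 1) / n + 2 * (n - 1) / n ^ 2 = 2 - 2 / n ^ 2 := by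
        field_simp; ring
      have : 0 ≤ 2 / (n : ℝ) ^ 2 := by positivity
      linarith
    linarith
  · linarith

theorem uK_bound (J : Finset (Fin n)) (hJ : J.card < n) (k : ℕ) (hk : 1 ≤ k) (hkN : k ≤ N ^ 2)
    (w : Fin n → ZMod N) : uK J k w ≤ ((4 + 2 * n) / Real.sqrt k) ^ J.card := by
  have hn : 0 < n := by omega
  have hN : (0 : ℝ) < N := by exact_mod_cast Nat.pos_of_ne_zero (NeZero.ne N)
  have hk' : (0 : ℝ) < k := by exact_mod_cast hk
  have hn' : (0 : ℝ) < n := by exact_mod_cast hn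
  rw [uK_fourier hn]
  have h1 : ∀ κ : Fin n → ZMod N,
      (1 / (N : ℝ) ^ n * ((∑ i, tfac J κ i) / n) ^ k) * (chi J κ w).re ≤
      ∏ i, (1 / (N : ℝ) * Real.exp (-(k / n ^ 2 * (1 - tfac J κ i)))) := by
    intro κ
    have hc : |(chi J κ w).re| ≤ 1 := (Complex.abs_re_le_norm _).trans (chi_norm J κ w).le
    have hp : |(1 / (N : ℝ) ^ n * ((∑ i, tfac J κ i) / n) ^ k)| =
        1 / (N : ℝ) ^ n * |(∑ i, tfac J κ i) / n| ^ k := by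
      rw [abs_mul, abs_pow, abs_of_nonneg (by positivity : (0 : ℝ) ≤ 1 / (N : ℝ) ^ n)]
    calc _ ≤ |(1 / (N : ℝ) ^ n * ((∑ i, tfac J κ i) / n) ^ k) * (chi J κ w).re| := le_abs_self _
      _ ≤ 1 / (N : ℝ) ^ n * |(∑ i, tfac J κ i) / n| ^ k := by
          rw [abs_mul, hp]
          exact mul_le_of_le_one_right (by positivity) hc
      _ ≤ 1 / (N : ℝ) ^ n * (∏ i, Real.exp (-((1 - tfac J κ i) / n ^ 2))) ^ k := by
          gcongr
          exact phi_abs J hJ κ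
      _ = _ := by
          rw [Finset.prod_mul_distrib, ← Finset.prod_pow]
          congr 1
          · simp
          · refine Finset.prod_congr rfl fun i _ => ?_
            rw [← Real.exp_nat_mul]
            congr 1
            ring
  refine (Finset.sum_le_sum fun κ _ => h1 κ).trans ?_
  have h2 : ∑ κ : Fin n → ZMod N, ∏ i, (1 / (N : ℝ) * Real.exp (-(k / n ^ 2 * (1 - tfac J κ i)))) =
      ∏ i : Fin n, ∑ c : ZMod N, (1 / (N : ℝ) * Real.exp (-(k / n ^ 2 *
        (1 - if i ∈ J then (ZMod.stdAddChar c).re else 1)))) := by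
    rw [Finset.prod_univ_sum, Fintype.piFinset_univ]
    rfl
  rw [h2]
  have h3 : ∀ i : Fin n, ∑ c : ZMod N, (1 / (N : ℝ) * Real.exp (-(k / n ^ 2 *
        (1 - if i ∈ J then (ZMod.stdAddChar c).re else 1)))) ≤
      if i ∈ J then (4 + 2 * n) / Real.sqrt k else 1 := by
    intro i
    split_ifs with hi
    · rw [← Finset.mul_sum]
      have := sum_char N (k / n ^ 2) (by positivity)
      have hs : Real.sqrt (8 * (k / n ^ 2)) = Real.sqrt 8 * Real.sqrt k / n := by
        rw [Real.sqrt_mul (by norm_num), Real.sqrt_div hk'.le, Real.sqrt_sq hn'.le]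
        ring
      have h8 : 2 ≤ Real.sqrt 8 := Real.le_sqrt_of_sq_le (by norm_num)
      have hsk : Real.sqrt k ≤ N := by
        rw [Real.sqrt_le_left hN.le]
        exact_mod_cast hkN
      have hsk0 : 0 < Real.sqrt k := Real.sqrt_pos.2 hk'
      calc _ ≤ 1 / (N : ℝ) * (4 * (1 + N / Real.sqrt (8 * (k / n ^ 2)))) := by gcongr
        _ = 4 / N + 4 * n / (Real.sqrt 8 * Real.sqrt k) := by
            rw [hs]; field_simp
        _ ≤ 4 / Real.sqrt k + 4 * n / (2 * Real.sqrt k) := by gcongr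
        _ = _ := by field_simp; ring
    · simp [ZMod.card]
  refine (Finset.prod_le_prod (fun i _ => Finset.sum_nonneg fun c _ => by positivity)
    fun i _ => h3 i).trans ?_
  rw [Finset.prod_ite, div_pow]
  simp
end

end Part5

section Part6

theorem uK_local {n : ℕ} (N : ℕ) (J : Finset (Fin n)) (k : ℕ) : ∀ y : Fin n → ℤ,
    (∀ i, |y i| + k < N) → uK J k (fun i => (y i : ZMod N)) = uK J k y := by
  induction k with
  | zero =>
    intro y hy
    unfold uK ind0
    congr 1
    apply propext
    refine forall₂_congr fun i hi => ?_
    rw [ZMod.intCast_zmod_eq_zero_iff_dvd]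
    constructor
    · intro h
      have := hy i
      exact Int.eq_zero_of_abs_lt_dvd h (by simpa using this)
    · intro h; rw [h]; exact dvd_zero _
  | succ k ih =>
    intro y hy
    simp only [uK, av]
    congr 1
    refine Finset.sum_congr rfl fun i _ => ?_
    have hs : ∀ a, |eT n ℤ i a| ≤ 1 := by
      intro a
      unfold eT
      by_cases h : a = i
      · subst h; simp
      · rw [Pi.single_eq_of_ne h]; simp
    have hc : ∀ a, ((eT n ℤ i a : ℤ) : ZMod N) = eT n (ZMod N) i a := by
      intro a
      unfold eT
      by_cases h : a = i
      · subst h; simp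
      · rw [Pi.single_eq_of_ne h, Pi.single_eq_of_ne h]; simp
    have h1 := ih (y + eT n ℤ i) (fun a => by
      have := hy a; have := hs a; have := abs_add_le (y a) (eT n ℤ i a)
      push_cast at *; simp only [Pi.add_apply]; linarith)
    have h2 := ih (y - eT n ℤ i) (fun a => by
      have := hy a; have := hs a; have := abs_sub (y a) (eT n ℤ i a)
      push_cast at *; simp only [Pi.sub_apply]; linarith)
    rw [← h1, ← h2]
    congr 2
    · ext a; simp [hc]
    · ext a; simp [hc]

theorem green_bound {n : ℕ} (J : Finset (Fin n)) (χ : ℝ) (R : (Fin n → ℤ) → ℝ)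
    (R0 : ∀ y, 0 ≤ R y) (hR : ∀ y, av (eT n ℤ) R y + (1 - χ) * ind0 J y ≤ R y) (K : ℕ) :
    ∀ y, (1 - χ) * ∑ k ∈ Finset.range K, uK J k y ≤ R y := by
  induction K with
  | zero => intro y; simpa using R0 y
  | succ K ih =>
    intro y
    refine le_trans ?_ (hR y)
    rw [Finset.sum_range_succ', mul_add]
    have : ∑ k ∈ Finset.range K, uK J (k + 1) y =
        av (eT n ℤ) (fun y => ∑ k ∈ Finset.range K, uK J k y) y := by
      rw [av_sum]; rfl
    rw [this, ← av_smul]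
    refine add_le_add (av_mono _ _ _ _ fun i => ⟨ih _, ih _⟩) le_rfl

theorem tsum_zStep (ν : ℕ) (x : ZLat (ν + 1)) (h : ZLat (ν + 1) → ℝ) (hh : ∀ y, 0 ≤ h y) :
    ∑' y, zStep (ν + 1) x y * ENNReal.ofReal (h y) =
      ENNReal.ofReal (av (eT (ν + 1) ℤ) h x) := by
  set sg : Fin (ν + 1) × Bool → ZLat (ν + 1) := fun p =>
    Pi.single p.1 (if p.2 then (1 : ℤ) else -1) with hsg
  have hmem : ∀ v, v ∈ zUnitVecs (ν + 1) ↔ ∃ p, v = sg p := by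
    intro v
    constructor
    · rintro ⟨i, h | h⟩
      · exact ⟨(i, true), by simpa [hsg] using h⟩
      · exact ⟨(i, false), by simpa [hsg] using h⟩
    · rintro ⟨⟨i, b⟩, h⟩
      cases b
      · exact ⟨i, Or.inr (by simpa [hsg] using h)⟩
      · exact ⟨i, Or.inl (by simpa [hsg] using h)⟩
  have e1 : ∀ y, zStep (ν + 1) x y * ENNReal.ofReal (h y) =
      ∑ p, (if y = x + sg p then
        (2 * (ν + 1 : ℕ) : ℝ≥0∞)⁻¹ * ENNReal.ofReal (h (x + sg p)) else 0) := by
    intro y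
    unfold zStep
    by_cases hy : y - x ∈ zUnitVecs (ν + 1)
    · obtain ⟨p, hp⟩ := (hmem _).1 hy
      have hyp : y = x + sg p := by rw [← hp]; abel
      rw [if_pos hy, Finset.sum_eq_single p]
      · rw [if_pos hyp, ← hyp]
      · intro b _ hb
        rw [if_neg]
        intro hb'
        apply hb
        apply single_inj ν
        have : sg b = sg p := add_left_cancel (hb'.symm.trans hyp)
        exact this
      · simp
    · rw [if_neg hy, zero_mul, Finset.sum_eq_zero]
      intro p _
      rw [if_neg]
      intro h
      exact hy ((hmem _).2 ⟨p, by rw [h]; abel⟩)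
  simp only [e1]
  rw [Summable.tsum_finsetSum (fun _ _ => ENNReal.summable)]
  simp only [tsum_ite_eq]
  rw [Fintype.sum_prod_type]
  simp only [Fintype.sum_bool, ← mul_add]
  rw [← Finset.mul_sum]
  unfold av eT
  rw [ENNReal.ofReal_div_of_pos (by positivity), ENNReal.div_eq_inv_mul]
  congr 1
  · congr 1
    rw [ENNReal.ofReal_mul (by norm_num), ENNReal.ofReal_natCast]
    simp
  · rw [ENNReal.ofReal_sum_of_nonneg (fun i _ => add_nonneg (hh _) (hh _))]
    refine Finset.sum_congr rfl fun i _ => ?_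
    rw [ENNReal.ofReal_add (hh _) (hh _)]
    simp only [hsg, if_true, Bool.false_eq_true, if_false]
    rw [show (Pi.single i (-1) : ZLat (ν + 1)) = - Pi.single i 1 by rw [← Pi.single_neg],
      sub_eq_add_neg]

theorem mc_set {X : Type*} [Countable X] [MeasurableSpace X] [MeasurableSingletonClass X]
    (p : X → X → ℝ≥0∞) (P : X → Measure (ℕ → X))
    (h1 : ∀ x, IsProbabilityMeasure (P x))
    (h2 : ∀ (x : X) (n : ℕ) (γ : ℕ → X), P x {ω | ∀ i ≤ n, ω i = γ i} =
        (if γ 0 = x then 1 else 0) * ∏ i ∈ Finset.range n, p (γ i) (γ (i + 1)))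
    (x : X) (E E' : Set (ℕ → X)) (hE : MeasurableSet E) (hE' : MeasurableSet E')
    (h : ∀ ω, scons x ω ∈ E' ↔ ω ∈ E) :
    P x E' = ∑' y, p x y * P y E := by
  have := mc_step p P h1 h2 x (E'.indicator 1) (measurable_one.indicator hE')
  rw [lintegral_indicator_one hE'] at this
  rw [this]
  congr 1; ext y
  congr 1
  rw [← lintegral_indicator_one hE]
  congr 1; ext ω
  by_cases hω : ω ∈ E
  · rw [Set.indicator_of_mem hω, Set.indicator_of_mem ((h ω).2 hω)]; rfl
  · rw [Set.indicator_of_notMem hω, Set.indicator_of_notMem (fun h' => hω ((h ω).1 h'))]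

/-- Hitting probability of the origin. -/
noncomputable def hitP (ν : ℕ) (Ql : ZLat ν → Measure (ℕ → ZLat ν)) (x : ZLat ν) : ℝ :=
  ((Ql x) {ω | ∃ n : ℕ, ω n = 0}).toReal

theorem measurableSet_hit {ν : ℕ} (k : ℕ) : MeasurableSet {ω : ℕ → ZLat ν | ∃ n, k ≤ n ∧ ω n = 0} := by
  have : {ω : ℕ → ZLat ν | ∃ n, k ≤ n ∧ ω n = 0} =
      ⋃ n, ⋃ (_ : k ≤ n), (fun ω : ℕ → ZLat ν => ω n) ⁻¹' {0} := by
    ext; simp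
  rw [this]
  exact MeasurableSet.iUnion fun n => MeasurableSet.iUnion fun _ =>
    measurable_pi_apply n (measurableSet_singleton 0)

theorem hitP_facts (ν : ℕ) (Ql : ZLat (ν + 1) → Measure (ℕ → ZLat (ν + 1)))
    (hQ : IsLatRW (ν + 1) Ql) :
    (∀ x, 0 ≤ hitP _ Ql x) ∧ hitP _ Ql 0 = 1 ∧
    (∀ x, x ≠ 0 → av (eT (ν + 1) ℤ) (hitP _ Ql) x = hitP _ Ql x) ∧
    av (eT (ν + 1) ℤ) (hitP _ Ql) 0 = retProb _ Ql ∧ retProb _ Ql ≤ 1 ∧ 0 ≤ retProb _ Ql := by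
  obtain ⟨h1, h2⟩ := hQ
  have r0 : ∀ x, 0 ≤ hitP _ Ql x := fun x => ENNReal.toReal_nonneg
  have hm0 : MeasurableSet {ω : ℕ → ZLat (ν + 1) | ∃ n, ω n = 0} := by
    simpa using measurableSet_hit (ν := ν + 1) 0
  have hm1 := measurableSet_hit (ν := ν + 1) 1
  have hof : ∀ y, Ql y {ω | ∃ n : ℕ, ω n = 0} = ENNReal.ofReal (hitP _ Ql y) := by
    intro y
    have := h1 y
    rw [hitP, ENNReal.ofReal_toReal (measure_ne_top _ _)]
  have hgen : ∀ x E', MeasurableSet E' →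
      (∀ ω, scons x ω ∈ E' ↔ ω ∈ {ω : ℕ → ZLat (ν + 1) | ∃ n, ω n = 0}) →
      (Ql x E').toReal = av (eT (ν + 1) ℤ) (hitP _ Ql) x := by
    intro x E' hE' h
    rw [mc_set (zStep (ν + 1)) Ql h1 (fun x n γ => by convert h2 x n γ) x _ E' hm0 hE' h]
    simp only [hof]
    rw [tsum_zStep ν x _ r0, ENNReal.toReal_ofReal (av_nonneg _ _ _ r0)]
  refine ⟨r0, ?_, ?_, ?_, ?_, ENNReal.toReal_nonneg⟩
  · have h3 : Ql 0 {ω | ∀ i ≤ 0, ω i = (fun _ => (0 : ZLat (ν + 1))) i} = 1 := by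
      rw [h2 0 0 (fun _ => 0)]; simp
    have := h1 0
    have h4 : Ql 0 {ω | ∃ n : ℕ, ω n = 0} = 1 := by
      apply le_antisymm prob_le_one
      rw [← h3]
      apply measure_mono
      intro ω hω
      exact ⟨0, hω 0 le_rfl⟩
    rw [hitP, h4]; simp
  · intro x hx
    rw [← hgen x _ hm0]
    · rfl
    · intro ω
      constructor
      · rintro ⟨n, hn⟩
        cases n with
        | zero => exact absurd hn hx
        | succ n => exact ⟨n, hn⟩
      · rintro ⟨n, hn⟩
        exact ⟨n + 1, hn⟩
  · rw [← hgen 0 _ hm1]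
    · rfl
    · intro ω
      constructor
      · rintro ⟨n, hn1, hn⟩
        cases n with
        | zero => omega
        | succ n => exact ⟨n, hn⟩
      · rintro ⟨n, hn⟩
        exact ⟨n + 1, by omega, hn⟩
  · unfold retProb
    have := h1 0
    have h : Ql 0 {ω | ∃ n : ℕ, 1 ≤ n ∧ ω n = 0} ≤ 1 := prob_le_one
    exact ENNReal.toReal_le_of_le_ofReal zero_le_one (by simpa using h)

theorem green_le (d m ν : ℕ) (hmd : ν + 1 + m = d + 1)
    (Ql : ZLat (ν + 1) → Measure (ℕ → ZLat (ν + 1)))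
    (hQ : IsLatRW (ν + 1) Ql) (J : Finset (Fin (d + 1))) (hJ : J.card = ν + 1) (χ : ℝ)
    (hχ : χ = (m : ℝ) / (d + 1) + (1 - (m : ℝ) / (d + 1)) * retProb (ν + 1) Ql)
    (K : ℕ) : (1 - χ) * ∑ k ∈ Finset.range K, uK J k (0 : Fin (d + 1) → ℤ) ≤ 1 := by
  obtain ⟨r0, r1, r2, r3, -, -⟩ := hitP_facts ν Ql hQ
  set r := hitP _ Ql
  let σ : Fin (ν + 1) ≃ J := (J.equivFinOfCardEq hJ).symm
  let res : (Fin (d + 1) → ℤ) → ZLat (ν + 1) := fun y a => y (σ a)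
  have hdm : (m : ℝ) = (d + 1) - (ν + 1) := by
    have : ((ν + 1 + m : ℕ) : ℝ) = ((d + 1 : ℕ) : ℝ) := by rw [hmd]
    push_cast at this; linarith
  have hav : ∀ y, av (eT (d + 1) ℤ) (fun y => r (res y)) y =
      (m : ℝ) / (d + 1) * r (res y) +
        (1 - (m : ℝ) / (d + 1)) * av (eT (ν + 1) ℤ) r (res y) := by
    intro y
    have hin : ∀ a, res (eT (d + 1) ℤ (σ a)) = eT (ν + 1) ℤ a := by
      intro a
      ext b
      simp only [res, eT]
      by_cases h : b = a
      · subst h; simp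
      · rw [Pi.single_eq_of_ne h, Pi.single_eq_of_ne]
        intro h'
        exact h (σ.injective (Subtype.ext h'))
    have hout : ∀ i, i ∉ J → res (eT (d + 1) ℤ i) = 0 := by
      intro i hi
      ext b
      simp only [res, eT, Pi.zero_apply]
      rw [Pi.single_eq_of_ne]
      intro h'
      exact hi (h' ▸ (σ b).2)
    have hadd : ∀ a b, res (a + b) = res a + res b := fun a b => rfl
    have hsub : ∀ a b, res (a - b) = res a - res b := fun a b => rfl
    unfold av
    rw [← Finset.sum_add_sum_compl J]
    have hc : ∑ i ∈ Jᶜ, (r (res (y + eT (d + 1) ℤ i)) + r (res (y - eT (d + 1) ℤ i))) =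
        m * (2 * r (res y)) := by
      rw [Finset.sum_congr rfl (g := fun _ => 2 * r (res y))]
      · rw [Finset.sum_const, Finset.card_compl, hJ, Fintype.card_fin, nsmul_eq_mul]
        congr 2
        omega
      · intro i hi
        rw [hadd, hsub, hout i (Finset.mem_compl.1 hi)]
        simp; ring
    have hj : ∑ i ∈ J, (r (res (y + eT (d + 1) ℤ i)) + r (res (y - eT (d + 1) ℤ i))) =
        ∑ a, (r (res y + eT (ν + 1) ℤ a) + r (res y - eT (ν + 1) ℤ a)) := by
      rw [← Finset.sum_coe_sort J, ← σ.sum_comp]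
      refine Finset.sum_congr rfl fun a _ => ?_
      rw [hadd, hsub, hin]
    rw [hc, hj, hdm]
    push_cast
    field_simp
    ring
  have hind : ∀ y, ind0 J y = if res y = 0 then 1 else 0 := by
    intro y
    unfold ind0
    congr 1
    apply propext
    constructor
    · intro h
      ext a
      exact h _ (σ a).2
    · intro h i hi
      have := congrFun h (σ.symm ⟨i, hi⟩)
      simpa [res] using this
  have := green_bound J χ (fun y => r (res y)) (fun y => r0 _) (fun y => by
    rw [hav, hind]
    by_cases h : res y = 0
    · rw [h, r1, r3, hχ]; simp
    · rw [r2 _ h]; simp only [h, if_false]; apply le_of_eq; ring) K 0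
  have h0 : res 0 = 0 := rfl
  rwa [h0, r1] at this


end Part6

section Part7

/-- Projection of the cylinder onto the full torus. -/
def rho (d N : ℕ) (x : Cyl d N) : Fin (d + 1) → ZMod N :=
  Fin.snoc (α := fun _ => ZMod N) x.1 (x.2 : ZMod N)

theorem rho_add (d N : ℕ) (x y : Cyl d N) : rho d N (x + y) = rho d N x + rho d N y := by
  ext i
  refine Fin.lastCases ?_ (fun a => ?_) i <;> simp [rho]

theorem rho_projE (d N : ℕ) (v : Lat d) : rho d N (projE d N v) = fun i => (v i : ZMod N) := by
  ext i
  refine Fin.lastCases ?_ (fun a => ?_) i <;> simp [rho, projE]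

theorem rho_eC (d N : ℕ) (i : Fin (d + 1)) : rho d N (eC d N i) = eT (d + 1) (ZMod N) i := by
  unfold eC eT
  rw [rho_projE]
  ext a
  by_cases h : a = i
  · subst h; simp
  · rw [Pi.single_eq_of_ne h, Pi.single_eq_of_ne h]; simp

theorem rho_sub (d N : ℕ) (x y : Cyl d N) : rho d N (x - y) = rho d N x - rho d N y := by
  rw [eq_sub_iff_add_eq, ← rho_add, sub_add_cancel]

theorem eC_snd (d N : ℕ) (i : Fin (d + 1)) :
    (eC d N i).2 = if i = Fin.last d then 1 else 0 := by
  simp only [eC, projE]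
  by_cases h : i = Fin.last d
  · subst h; simp
  · rw [if_neg h, Pi.single_eq_of_ne (Ne.symm h)]

theorem av_quad (d N : ℕ) (a b : ℝ) (x : Cyl d N) :
    av (eC d N) (fun x => b - ((x.2 : ℝ) - a) ^ 2) x = b - ((x.2 : ℝ) - a) ^ 2 - 1 / (d + 1) := by
  unfold av
  rw [Fin.sum_univ_castSucc]
  simp only [Prod.snd_add, Prod.snd_sub, eC_snd, Fin.castSucc_ne_last, if_true, if_false,
    add_zero, sub_zero, Finset.sum_const, Finset.card_univ, Fintype.card_fin, nsmul_eq_mul]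
  push_cast
  field_simp
  ring

/-- Truncated Green function on the torus. -/
noncomputable def greenN (d N : ℕ) (J : Finset (Fin (d + 1))) (w : Fin (d + 1) → ZMod N) : ℝ :=
  ∑ k ∈ Finset.range (N ^ 2), uK J k w

theorem av_green (d N : ℕ) (J : Finset (Fin (d + 1))) (w : Fin (d + 1) → ZMod N) :
    av (eT (d + 1) (ZMod N)) (greenN d N J) w = greenN d N J w - ind0 J w + uK J (N ^ 2) w := by
  have h1 : av (eT (d + 1) (ZMod N)) (greenN d N J) w =
      ∑ k ∈ Finset.range (N ^ 2), uK J (k + 1) w := av_sum _ _ _ _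
  have h2 := Finset.sum_range_succ' (fun k => uK J k w) (N ^ 2)
  have h3 := Finset.sum_range_succ (fun k => uK J k w) (N ^ 2)
  rw [h1]
  unfold greenN
  have h4 : uK J 0 w = ind0 J w := rfl
  linarith

theorem potential (d N : ℕ) [NeZero N] (J : Finset (Fin (d + 1))) (hJ : J.card < d + 1) (j : ℤ)
    (y : Lat d) (p' : ℝ)
    (hp : 1 - 1 / greenN d N J 0 +
      4 * N ^ 2 * ((d + 1) * ((4 + 2 * (d + 1)) / N) ^ J.card) ≤ p') :
    ∃ g : Cyl d N → ℝ, (∀ x, 0 ≤ g x) ∧ (∀ x, g x ≤ 1) ∧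
      (∀ x ∈ Btl d N j, (∀ i ∈ J, rho d N x i = (y i : ZMod N)) → g x = 1) ∧
      (∀ x ∈ Btl d N j, ¬ (∀ i ∈ J, rho d N x i = (y i : ZMod N)) → av (eC d N) g x ≤ g x) ∧
      (∀ x ∈ Btl d N j, (∀ i ∈ J, rho d N x i = (y i : ZMod N)) → av (eC d N) g x ≤ p') := by
  have hN0 : 0 < N := Nat.pos_of_ne_zero (NeZero.ne N)
  have hN : (0 : ℝ) < N := by exact_mod_cast hN0
  set b : ℝ := ((4 + 2 * (d + 1)) / N) ^ J.card with hb
  set c : ℝ := (d + 1) * b with hc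
  have hb0 : 0 ≤ b := by positivity
  have hc0 : 0 ≤ c := by positivity
  set y0 : Fin (d + 1) → ZMod N := fun i => (y i : ZMod N) with hy0
  set U0 := greenN d N J 0 with hU0
  have hU1 : 1 ≤ U0 := by
    rw [hU0]
    unfold greenN
    have : uK J 0 (0 : Fin (d + 1) → ZMod N) = 1 := by simp [uK, ind0]
    rw [← this]
    exact Finset.single_le_sum (f := fun k => uK J k (0 : Fin (d + 1) → ZMod N))
      (fun k _ => uK_nonneg J k _) (Finset.mem_range.2 (by positivity))
  have hUpos : 0 < U0 := by linarith
  have hUn : ∀ w, 0 ≤ greenN d N J w := fun w => Finset.sum_nonneg fun k _ => uK_nonneg J k _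
  have hub : ∀ w : Fin (d + 1) → ZMod N, uK J (N ^ 2) w ≤ b := by
    intro w
    have := uK_bound J hJ (N ^ 2) (Nat.one_le_pow _ _ hN0) le_rfl w
    rw [hb]
    push_cast at this
    rwa [Real.sqrt_sq hN.le] at this
  set V : Cyl d N → ℝ := fun x => (2 * N) ^ 2 - ((x.2 : ℝ) - j * N) ^ 2 with hV
  set G : Cyl d N → ℝ := fun x => greenN d N J (rho d N x - y0) + c * V x with hG
  have havG : ∀ x, av (eC d N) G x ≤ G x - ind0 J (rho d N x - y0) := by
    intro x
    rw [hG, av_add, av_smul, av_quad]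
    have e : av (eC d N) (fun x => greenN d N J (rho d N x - y0)) x =
        av (eT (d + 1) (ZMod N)) (greenN d N J) (rho d N x - y0) := by
      unfold av
      congr 1
      refine Finset.sum_congr rfl fun i _ => ?_
      beta_reduce
      rw [rho_add, rho_sub, rho_eC, add_sub_right_comm, sub_right_comm]
    rw [e, av_green]
    have h1 := hub (rho d N x - y0)
    have h2 : c * (1 / (d + 1)) = b := by rw [hc]; field_simp
    simp only [hV]
    rw [mul_sub, h2]
    linarith
  have hVnn : ∀ x : Cyl d N, |x.2 - j * N| ≤ 2 * N → 0 ≤ V x := by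
    intro x hx
    simp only [hV]
    have h' : |(x.2 : ℝ) - j * N| ≤ 2 * N := by exact_mod_cast hx
    have := sq_le_sq' (abs_le.1 h').1 (abs_le.1 h').2
    linarith
  have hB : ∀ x ∈ Btl d N j, |x.2 - j * N| ≤ 2 * N - 1 := by
    intro x hx
    have h1 : (j - 2) * (N : ℤ) + 1 ≤ x.2 := hx.1
    have h2 : x.2 ≤ (j + 2) * (N : ℤ) - 1 := hx.2
    rw [abs_le]
    constructor <;> linarith
  have hGnn : ∀ x : Cyl d N, |x.2 - j * N| ≤ 2 * N → 0 ≤ G x := fun x hx =>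
    add_nonneg (hUn _) (mul_nonneg hc0 (hVnn x hx))
  set g : Cyl d N → ℝ := fun x => if x ∈ Btl d N j then min (G x / U0) 1 else 0 with hg
  have gle1 : ∀ x, g x ≤ 1 := by
    intro x
    simp only [hg]
    split_ifs
    · exact min_le_right _ _
    · exact zero_le_one
  have gleG : ∀ x : Cyl d N, |x.2 - j * N| ≤ 2 * N → g x ≤ U0⁻¹ * G x := by
    intro x hx
    have := hGnn x hx
    simp only [hg]
    split_ifs
    · rw [← div_eq_inv_mul]; exact min_le_left _ _
    · positivity
  have hav1 : ∀ x, av (eC d N) g x ≤ 1 := by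
    intro x
    rw [← av_const (Nat.succ_pos d) (eC d N) 1 x]
    exact av_mono _ _ _ _ fun i => ⟨gle1 _, gle1 _⟩
  have hav2 : ∀ x ∈ Btl d N j, av (eC d N) g x ≤
      (G x - ind0 J (rho d N x - y0)) / U0 := by
    intro x hx
    have h1 : av (eC d N) g x ≤ av (eC d N) (fun x => U0⁻¹ * G x) x := by
      have hx' := abs_le.1 (hB x hx)
      refine av_mono _ _ _ _ fun i => ⟨gleG _ ?_, gleG _ ?_⟩
      · rw [Prod.snd_add, eC_snd, abs_le]
        split_ifs <;> constructor <;> linarith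
      · rw [Prod.snd_sub, eC_snd, abs_le]
        split_ifs <;> constructor <;> linarith
    rw [av_smul] at h1
    refine h1.trans ?_
    rw [div_eq_inv_mul]
    exact mul_le_mul_of_nonneg_left (havG x) (by positivity)
  have hind : ∀ x : Cyl d N, ind0 J (rho d N x - y0) =
      if (∀ i ∈ J, rho d N x i = (y i : ZMod N)) then 1 else 0 := by
    intro x
    unfold ind0
    congr 1
    apply propext
    refine forall₂_congr fun i hi => ?_
    rw [Pi.sub_apply, sub_eq_zero]
  have hGF : ∀ x : Cyl d N, (∀ i ∈ J, rho d N x i = (y i : ZMod N)) → G x = U0 + c * V x := by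
    intro x hx
    simp only [hG]
    congr 1
    refine Finset.sum_congr rfl fun k _ => uK_congr J k _ _ fun i hi => ?_
    rw [Pi.sub_apply, hx i hi, Pi.zero_apply, sub_self]
  refine ⟨g, ?_, gle1, ?_, ?_, ?_⟩
  · intro x
    simp only [hg]
    split_ifs with h
    · have := hGnn x ((hB x h).trans (by linarith))
      exact le_min (by positivity) zero_le_one
    · exact le_rfl
  · intro x hx hF
    simp only [hg, hx, if_true]
    apply min_eq_right
    rw [le_div_iff₀ hUpos, hGF x hF]
    have := mul_nonneg hc0 (hVnn x ((hB x hx).trans (by linarith)))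
    linarith
  · intro x hx hF
    have h1 := hav2 x hx
    rw [hind, if_neg hF, sub_zero] at h1
    simp only [hg, hx, if_true]
    exact le_min h1 (hav1 x)
  · intro x hx hF
    have h1 := hav2 x hx
    rw [hind, if_pos hF, hGF x hF] at h1
    refine le_trans (h1.trans ?_) hp
    have hV4 : V x ≤ 4 * N ^ 2 := by
      simp only [hV]; nlinarith [sq_nonneg ((x.2 : ℝ) - j * N)]
    have hcV : c * V x / U0 ≤ c * (4 * N ^ 2) := by
      have hV0 := mul_nonneg hc0 (hVnn x ((hB x hx).trans (by linarith)))
      calc c * V x / U0 ≤ c * V x := div_le_self hV0 hU1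
        _ ≤ _ := by gcongr
    have e : (U0 + c * V x - 1) / U0 = 1 - 1 / U0 + c * V x / U0 := by field_simp; ring
    rw [e]
    linarith


end Part7

section Part8

theorem summable_sqrt3 : Summable (fun k : ℕ => (1 / Real.sqrt k) ^ 3) := by
  have h := (Real.summable_one_div_nat_rpow (p := 3 / 2)).2 (by norm_num)
  refine h.congr fun k => ?_
  rw [Real.sqrt_eq_rpow, div_pow, one_pow, ← Real.rpow_natCast, ← Real.rpow_mul (Nat.cast_nonneg k)]
  norm_num

theorem greenN_bound (d ν : ℕ) (hν3 : 3 ≤ ν + 1) (hν : ν + 1 < d + 1) (S0 : ℝ)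
    (hS : ∀ J : Finset (Fin (d + 1)), J.card = ν + 1 → ∀ K,
      ∑ k ∈ Finset.range K, uK J k (0 : Fin (d + 1) → ℤ) ≤ S0) (δ : ℝ) (hδ : 0 < δ) :
    ∃ N0 : ℕ, ∀ N : ℕ, N0 ≤ N → ∀ [NeZero N], ∀ J : Finset (Fin (d + 1)), J.card = ν + 1 →
      greenN d N J 0 ≤ S0 + δ := by
  set C : ℝ := (4 + 2 * ((d + 1 : ℕ) : ℝ)) ^ (ν + 1) with hC
  have hC0 : 0 < C := by positivity
  have hsum := summable_sqrt3
  have ht := tendsto_sum_nat_add (fun k : ℕ => (1 / Real.sqrt k) ^ 3)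
  obtain ⟨K, hK1, hK⟩ : ∃ K : ℕ, 1 ≤ K ∧ ∑' k : ℕ, (1 / Real.sqrt ((k + K : ℕ) : ℝ)) ^ 3 < δ / C := by
    have h1 := (ht.eventually (gt_mem_nhds (show (0 : ℝ) < δ / C by positivity))).and
      (eventually_ge_atTop 1)
    obtain ⟨K, h2, h3⟩ := h1.exists
    exact ⟨K, h3, h2⟩
  refine ⟨K + 1, fun N hN _ J hJ => ?_⟩
  have hKN : K ≤ N ^ 2 := by nlinarith
  unfold greenN
  rw [← Finset.sum_range_add_sum_Ico _ hKN]
  refine add_le_add ?_ ?_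
  · refine le_trans (le_of_eq ?_) (hS J hJ K)
    refine Finset.sum_congr rfl fun k hk => ?_
    have hk' := Finset.mem_range.1 hk
    have := uK_local N J k (0 : Fin (d + 1) → ℤ) (fun i => by simp; omega)
    rw [← this]
    congr 1
    funext i
    simp
  · have hb : ∀ k ∈ Finset.Ico K (N ^ 2), uK J k (0 : Fin (d + 1) → ZMod N) ≤
        C * (1 / Real.sqrt k) ^ 3 := by
      intro k hk
      obtain ⟨k1, k2⟩ := Finset.mem_Ico.1 hk
      refine (uK_bound J (by omega) k (by omega) k2.le 0).trans ?_
      rw [hJ, div_eq_mul_one_div, mul_pow, hC]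
      refine mul_le_mul_of_nonneg_left ?_ (by positivity)
      refine pow_le_pow_of_le_one (by positivity) ?_ hν3
      rw [div_le_one]
      · rw [Real.one_le_sqrt]; exact_mod_cast (by omega : 1 ≤ k)
      · apply Real.sqrt_pos.2; exact_mod_cast (by omega : 0 < k)
    refine (Finset.sum_le_sum hb).trans ?_
    rw [← Finset.mul_sum, Finset.sum_Ico_eq_sum_range]
    have h1 : ∑ k ∈ Finset.range (N ^ 2 - K), (1 / Real.sqrt ((K + k : ℕ) : ℝ)) ^ 3 ≤
        ∑' k : ℕ, (1 / Real.sqrt ((k + K : ℕ) : ℝ)) ^ 3 := by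
      simp_rw [add_comm K]
      exact ((summable_nat_add_iff K).2 hsum).sum_le_tsum _ (fun _ _ => by positivity)
    have h2 := h1.trans hK.le
    rw [le_div_iff₀ hC0] at h2
    linarith

theorem small_term (d ν : ℕ) (hν3 : 3 ≤ ν + 1) (δ : ℝ) (hδ : 0 < δ) :
    ∃ N0 : ℕ, ∀ N : ℕ, N0 ≤ N → 
      4 * (N : ℝ) ^ 2 * ((d + 1) * ((4 + 2 * ((d : ℝ) + 1)) / N) ^ (ν + 1)) ≤ δ := by
  set C : ℝ := 4 * ((d + 1) * (4 + 2 * ((d : ℝ) + 1)) ^ (ν + 1)) with hC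
  have hC0 : 0 < C := by positivity
  obtain ⟨M, hM⟩ := exists_nat_ge (C / δ)
  refine ⟨M + 1, fun N hN => ?_⟩
  have hN1 : (1 : ℝ) ≤ N := by exact_mod_cast (by omega : 1 ≤ N)
  have hMN : (M : ℝ) ≤ N := by exact_mod_cast (by omega : M ≤ N)
  have e : 4 * (N : ℝ) ^ 2 * ((d + 1) * ((4 + 2 * ((d : ℝ) + 1)) / N) ^ (ν + 1)) =
      C * (N ^ 2 / N ^ (ν + 1)) := by
    rw [hC, div_pow]; ring
  rw [e]
  have h1 : (N : ℝ) ^ 2 / N ^ (ν + 1) ≤ 1 / N := by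
    rw [div_le_div_iff₀ (by positivity) (by positivity)]
    have h := pow_le_pow_right₀ hN1 hν3
    rw [one_mul]
    refine le_trans (le_of_eq ?_) h
    ring
  calc C * (N ^ 2 / N ^ (ν + 1)) ≤ C * (1 / N) := mul_le_mul_of_nonneg_left h1 hC0.le
    _ = C / N := by ring
    _ ≤ δ := by
      rw [div_le_iff₀ (by positivity)]
      rw [div_le_iff₀ hδ] at hM
      nlinarith

theorem asymp (d m ν : ℕ) (hmd : ν + 1 + m = d + 1) (hm : 1 ≤ m) (hν3 : 3 ≤ ν + 1)
    (Ql : ZLat (ν + 1) → Measure (ℕ → ZLat (ν + 1))) (hQ : IsLatRW (ν + 1) Ql) (χ : ℝ)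
    (hχ : χ = (m : ℝ) / (d + 1) + (1 - (m : ℝ) / (d + 1)) * retProb (ν + 1) Ql)
    (p' : ℝ) (h1 : χ < p') (h2 : p' < 1) :
    ∃ N0 : ℕ, ∀ N : ℕ, N0 ≤ N → ∀ [NeZero N], ∀ J : Finset (Fin (d + 1)), J.card = ν + 1 →
      1 - 1 / greenN d N J 0 +
        4 * N ^ 2 * ((d + 1) * ((4 + 2 * (d + 1)) / N) ^ J.card) ≤ p' := by
  set p2 := (χ + p') / 2 with hp2
  have a1 : 0 < 1 - χ := by linarith
  have a2 : 0 < 1 - p2 := by linarith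
  have a3 : 1 / (1 - χ) < 1 / (1 - p2) := by
    apply one_div_lt_one_div_of_lt a2; linarith
  obtain ⟨N1, hN1⟩ := greenN_bound d ν hν3 (by omega) (1 / (1 - χ)) (fun J hJ K => by
    rw [le_div_iff₀ a1, mul_comm]
    exact green_le d m ν hmd Ql hQ J hJ χ hχ K) (1 / (1 - p2) - 1 / (1 - χ)) (by linarith)
  obtain ⟨N2, hN2⟩ := small_term d ν hν3 (p' - p2) (by linarith)
  refine ⟨max N1 N2, fun N hN _ J hJ => ?_⟩
  have b1 := hN1 N (le_trans (le_max_left _ _) hN) J hJ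
  have b2 := hN2 N (le_trans (le_max_right _ _) hN)
  rw [hJ]
  have hpos : 0 < greenN d N J 0 := by
    have : uK J 0 (0 : Fin (d + 1) → ZMod N) = 1 := by simp [uK, ind0]
    have h3 : 1 ≤ greenN d N J 0 := by
      unfold greenN
      rw [← this]
      exact Finset.single_le_sum (f := fun k => uK J k (0 : Fin (d + 1) → ZMod N))
        (fun k _ => uK_nonneg J k _) (Finset.mem_range.2 (pow_pos (Nat.pos_of_ne_zero (NeZero.ne N)) _))
    linarith
  have b3 : 1 - p2 ≤ 1 / greenN d N J 0 := by
    rw [le_div_iff₀ hpos, mul_comm, ← le_div_iff₀ a2]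
    linarith
  linarith


end Part8

section Part9

theorem phi_nonneg (d N : ℕ) (Pl : Cyl d N → Measure (ℕ → Cyl d N)) (j : ℤ) (lam : ℝ)
    (A : Finset (Cyl d N)) (z : Cyl d N) : 0 ≤ phi d N Pl j lam A z :=
  integral_nonneg fun _ => (Real.exp_pos _).le

theorem sSup_lower (d N m : ℕ) (Pl : Cyl d N → Measure (ℕ → Cyl d N)) (lam : ℝ) :
    -1 ≤ sSup {r : ℝ | ∃ j : ℤ, ∃ A ∈ Adm d N j m, r = phiSup d N Pl j lam A - 1} := by
  set S := {r : ℝ | ∃ j : ℤ, ∃ A ∈ Adm d N j m, r = phiSup d N Pl j lam A - 1} with hS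
  have h : ∀ r ∈ S, -1 ≤ r := by
    rintro r ⟨j, A, -, rfl⟩
    have : 0 ≤ phiSup d N Pl j lam A := Real.iSup_nonneg fun z => phi_nonneg _ _ _ _ _ _ _
    linarith
  by_cases hb : BddAbove S
  · rcases S.eq_empty_or_nonempty with h0 | ⟨r, hr⟩
    · rw [h0, Real.sSup_empty]; norm_num
    · exact (h r hr).trans (le_csSup hb hr)
  · rw [Real.sSup_of_not_bddAbove hb]; norm_num

theorem sup_bound (d m ν : ℕ) (hmd : ν + 1 + m = d + 1) (hm : 1 ≤ m)
    (N : ℕ) [NeZero N] (Pl : Cyl d N → Measure (ℕ → Cyl d N)) (hPl : IsCylRW d N Pl) (lam : ℝ)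
    (hlam : 0 < lam) (p' : ℝ) (hp1 : Real.exp lam * p' < 1)
    (hp : ∀ J : Finset (Fin (d + 1)), J.card = ν + 1 →
      1 - 1 / greenN d N J 0 +
        4 * N ^ 2 * ((d + 1) * ((4 + 2 * (d + 1)) / N) ^ J.card) ≤ p') :
    sSup {r : ℝ | ∃ j : ℤ, ∃ A ∈ Adm d N j m, r = phiSup d N Pl j lam A - 1} ≤
      (Real.exp lam - 1) / (1 - Real.exp lam * p') := by
  have h0 : 0 ≤ (Real.exp lam - 1) / (1 - Real.exp lam * p') := by
    have := Real.add_one_le_exp lam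
    exact div_nonneg (by linarith) (by linarith)
  refine Real.sSup_le ?_ h0
  rintro r ⟨j, A, ⟨-, -, F, ⟨I, hI, y, rfl⟩, hAF⟩, rfl⟩
  have hJ : (Iᶜ).card = ν + 1 := by
    rw [Finset.card_compl, Fintype.card_fin, hI]; omega
  obtain ⟨g, g0, g1, gF, gs, gp⟩ := potential d N Iᶜ (by omega) j y p' (hp _ hJ)
  have hle : ∀ z, phi d N Pl j lam A z ≤ 1 + (Real.exp lam - 1) / (1 - Real.exp lam * p') := by
    intro z
    refine phi_le_of_potential d N Pl hPl j lam hlam A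
      {x | ∀ i ∈ Iᶜ, rho d N x i = (y i : ZMod N)} ?_ p' hp1 g g0 g1 gF gs gp z
    intro x hx i hi
    obtain ⟨v, hv, rfl⟩ := hAF hx
    have hv' := hv i (Finset.mem_compl.1 hi)
    beta_reduce
    rw [rho_projE]
    simp [hv']
  have : phiSup d N Pl j lam A ≤ 1 + (Real.exp lam - 1) / (1 - Real.exp lam * p') := ciSup_le hle
  linarith

theorem main_aux (d m ν : ℕ) (hmd : ν + 1 + m = d + 1) (hm : 1 ≤ m) (hν3 : 3 ≤ ν + 1)
    (Q : ZLat (ν + 1) → Measure (ℕ → ZLat (ν + 1))) (hQ : IsLatRW (ν + 1) Q)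
    (lam : ℝ) (hlam : 0 < lam)
    (χ : ℝ) (hχ : χ = (m : ℝ) / (d + 1) + (1 - (m : ℝ) / (d + 1)) * retProb (ν + 1) Q)
    (hchi : Real.exp lam * χ < 1)
    (Pl : ∀ N : ℕ, Cyl d N → Measure (ℕ → Cyl d N))
    (hPl : ∀ N : ℕ, IsCylRW d N (Pl N)) :
    limsup (fun N : ℕ =>
        sSup {r : ℝ | ∃ j : ℤ, ∃ A ∈ Adm d N j m,
          r = phiSup d N (Pl N) j lam A - 1}) atTop
      ≤ (Real.exp lam - 1) / (1 - Real.exp lam * χ) := by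
  have hχ0 : 0 ≤ χ := by
    obtain ⟨-, -, -, -, -, q0⟩ := hitP_facts ν Q hQ
    have : (m : ℝ) / (d + 1) ≤ 1 := by
      rw [div_le_one (by positivity)]
      exact_mod_cast (by omega : m ≤ d + 1)
    rw [hχ]
    have := mul_nonneg (sub_nonneg.2 this) q0
    positivity
  have he : 1 < Real.exp lam := Real.one_lt_exp_iff.2 hlam
  have hcob : IsCoboundedUnder (· ≤ ·) atTop (fun N : ℕ =>
        sSup {r : ℝ | ∃ j : ℤ, ∃ A ∈ Adm d N j m,
          r = phiSup d N (Pl N) j lam A - 1}) := by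
    refine IsBoundedUnder.isCoboundedUnder_le ⟨-1, ?_⟩
    exact eventually_map.2 (Eventually.of_forall fun N => sSup_lower d N m (Pl N) lam)
  refine le_of_forall_pos_le_add fun ε hε => ?_
  have hne : 1 - Real.exp lam * χ ≠ 0 := by linarith
  have hcont : ContinuousAt (fun p : ℝ => (Real.exp lam - 1) / (1 - Real.exp lam * p)) χ := by
    refine ContinuousAt.div (by fun_prop) (by fun_prop) hne
  have ev1 : ∀ᶠ p in nhdsWithin χ (Set.Ioi χ), (Real.exp lam - 1) / (1 - Real.exp lam * p) <
      (Real.exp lam - 1) / (1 - Real.exp lam * χ) + ε :=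
    nhdsWithin_le_nhds (hcont.eventually (gt_mem_nhds (by linarith)))
  have ev2 : ∀ᶠ p in nhdsWithin χ (Set.Ioi χ), Real.exp lam * p < 1 :=
    nhdsWithin_le_nhds ((by fun_prop : ContinuousAt (fun p : ℝ => Real.exp lam * p) χ).eventually
      (gt_mem_nhds hchi))
  obtain ⟨p', ⟨e1, e2⟩, e3⟩ := ((ev1.and ev2).and self_mem_nhdsWithin).exists
  have e3 : χ < p' := e3
  have hp1 : p' < 1 := by nlinarith
  obtain ⟨N0, hN0⟩ := asymp d m ν hmd hm hν3 Q hQ χ hχ p' e3 hp1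
  refine limsup_le_of_le hcob ?_
  filter_upwards [eventually_ge_atTop (max N0 1)] with N hN
  have : NeZero N := ⟨by have := le_trans (le_max_right _ _) hN; omega⟩
  exact (sup_bound d m ν hmd hm N (Pl N) (hPl N) lam hlam p' e2
    (hN0 N (le_trans (le_max_left _ _) hN))).trans e1.le


end Part9

/-- **(1.34).** For `d ≥ 3`, `1 ≤ m ≤ d-2` and `λ > 0` with `χ(λ) < 1`,
`limsup_N sup_{j∈ℤ, A∈A^j_m} (‖φ_j‖_∞ - 1) ≤ (e^λ - 1)/(1 - χ(λ))`. -/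
theorem statement_7 (d m : ℕ) (hd : 3 ≤ d) (hm1 : 1 ≤ m) (hm2 : m ≤ d - 2)
    (Q : ZLat (d + 1 - m) → Measure (ℕ → ZLat (d + 1 - m))) (hQ : IsLatRW (d + 1 - m) Q)
    (lam : ℝ) (hlam : 0 < lam)
    (hchi : Real.exp lam *
        ((m : ℝ) / (d + 1) + (1 - (m : ℝ) / (d + 1)) * retProb (d + 1 - m) Q) < 1)
    (Pl : ∀ N : ℕ, Cyl d N → Measure (ℕ → Cyl d N))
    (hPl : ∀ N : ℕ, IsCylRW d N (Pl N)) :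
    limsup (fun N : ℕ =>
        sSup {r : ℝ | ∃ j : ℤ, ∃ A ∈ Adm d N j m,
          r = phiSup d N (Pl N) j lam A - 1}) atTop
      ≤ (Real.exp lam - 1) /
          (1 - Real.exp lam *
            ((m : ℝ) / (d + 1) + (1 - (m : ℝ) / (d + 1)) * retProb (d + 1 - m) Q)) := by
  obtain ⟨ν, hν⟩ : ∃ ν, d + 1 - m = ν + 1 := ⟨d - m, by omega⟩
  have hmd : ν + 1 + m = d + 1 := by omega
  have hν3 : 3 ≤ ν + 1 := by omega
  generalize d + 1 - m = n at *
  subst hν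
  exact main_aux d m ν hmd hm1 hν3 Q hQ lam hlam _ rfl hchi Pl hPl

end DiscCyl
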